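/- Let 1 < p < 2, -1 < α < ∞, and let q be the conjugate exponent of p. Let k ∈ A^q_α be nonzero with ‖k(e^{it}·) + k(e^{-it}·) - 2k(·)‖_{q,α} ≤ ‖k‖_{Λ*,β,A^q_α} |t|^β for all real t, where 0 < β ≤ 2, and suppose k is normalized so that the extremal function F for k satisfies ∫_𝔻 F k̄ dA_α = 1. Let F_n be the degree-n extremal polynomial for the functional φ(f) = ∫_𝔻 f k̄ dA_α. Let A_γ = (2^{1+γ}/π) ∫_0^∞ |cos t - cos 2t| t^{γ-2} dt, and let B̃_0 = C_2/π + π C_0 where h(t) = (cos t - cos 2t)/2, H_0(t) = h(t)/t², H_k(t) = ∫_t^∞ H_{k-1}(x) dx, C_k = (4/π)∫_0^∞ |H_k(t)| dt. Then for every n ≥ 1: if 0 < β < 2, ‖F - F_n‖_{p,α} ≤ 4 (p-1)^{-3/4} A_{β/2}^{1/2} ‖k‖_{Λ*,β,A^q_α}^{1/4} n^{-β/4}; and if β = 2, ‖F - F_n‖_{p,α} ≤ 4 (p-1)^{-3/4} B̃_0^{1/2} ‖k‖_{Λ*,β,A^q_α}^{1/4} n^{-1/2}. In particular ‖F - F_n‖_{p,α}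 = O(n^{-β/4}). -/

import Mathlib

/-! The exponent `β/4` comes from duality rather than from smoothness of `F` itself.

* Let `ν` be the probability measure on `(-π, π]` with density proportional to
  `|∑_{j ≤ n} c_j e^{ijt}|²`, where `c_j = sin ((j+1)π/(n+2))`. It is symmetric, its moments above
  `n` vanish, and `∫ (1 - cos t) dν = 1 - cos (π/(n+2))`, so that
  `∫ |t|^β dν ≤ (π²/(2n))^β` (`integral_abs_rpow_fejerMeas_le`).
* The average `P(z) = ∫ F(e^{it}z) dν(t)` is therefore a polynomial of degree at most `n`
  (`exists_poly_average`), of norm at most `1` (`integral_norm_average_le`). In `φ(P)` the rotations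
  can be moved to `k`, and by symmetry of `ν` only second differences of `k` occur, whence
  `Re φ(P) ≥ 1 - (M/2)(π²/(2n))^β` (`re_integral_average_ge`). By extremality the same lower
  bound holds for `Re φ(F_n)`.
* Since `φ` has norm `1`, the midpoint `(F + F_n)/2` has norm at least
  `1 - (M/4)(π²/(2n))^β`, and the uniform convexity of `L^p` for `1 < p < 2`, with modulus of power
  type two applied in a weak form (`uniform_convexity`), bounds `‖F - F_n‖⁴` by
  `8 M (π²/(2n))^β / (p-1)²` (`bNorm_sub_pow_four_le`).
* The stated constants are larger: `(π²/2)^β ≤ 32 A_{β/2}²` and `(π²/2)² ≤ 32 B̃_0²`, by elementary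
  lower bounds for the defining integrals (`rpow_le_Acoef_sq`, `rpow_le_Btil0_sq`).
-/

open MeasureTheory Complex Set Metric

noncomputable section

/-- The open unit disc in `ℂ`. -/
def unitDisc : Set ℂ := Metric.ball 0 1

/-- The density of the weighted measure `dA_α = (α+1) π⁻¹ (1-|z|²)^α dA`
with respect to area measure. -/
def wt (α : ℝ) (z : ℂ) : ℝ := (α + 1) / Real.pi * (1 - ‖z‖ ^ 2) ^ α

/-- The norm `‖f‖_{p,α}` of the weighted Bergman space `A^p_α`. -/
def bNorm (p α : ℝ) (f : ℂ → ℂ) : ℝ :=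
  (∫ z in unitDisc, ‖f z‖ ^ p * wt α z) ^ (1 / p)

/-- Membership in the weighted Bergman space `A^p_α`: analytic on the unit disc
with finite weighted `p`-norm. -/
def MemAp (p α : ℝ) (f : ℂ → ℂ) : Prop :=
  DifferentiableOn ℂ f unitDisc ∧
    IntegrableOn (fun z => ‖f z‖ ^ p * wt α z) unitDisc

/-- `E_n^{p,α}(f)`: the distance from `f` to the polynomials of degree at most `n`
in the `A^p_α` norm. -/
def polyErr (p α : ℝ) (n : ℕ) (f : ℂ → ℂ) : ℝ :=
  sInf {e | ∃ P : Polynomial ℂ, P.natDegree ≤ n ∧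
    e = bNorm p α fun z => f z - P.eval z}

/-- The pairing `∫_𝔻 f k̄ dA_α`. -/
def pairing (α : ℝ) (f k : ℂ → ℂ) : ℂ :=
  ∫ z in unitDisc, f z * (starRingEnd ℂ) (k z) * (wt α z : ℂ)

/-- `F` is the extremal function in `A^p_α` for the integral kernel `k`:
it has unit norm and maximizes `Re ∫_𝔻 F k̄ dA_α` over the unit ball. -/
def IsExtremalFor (p α : ℝ) (k F : ℂ → ℂ) : Prop :=
  MemAp p α F ∧ bNorm p α F = 1 ∧
    ∀ g, MemAp p α g → bNorm p α g ≤ 1 →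
      (pairing α g k).re ≤ (pairing α F k).re

/-- `Q` is the degree-`n` extremal polynomial for the kernel `k`: it has degree
at most `n`, unit `A^p_α` norm, and maximizes `Re ∫_𝔻 P k̄ dA_α` among
polynomials of degree at most `n` in the unit ball. -/
def IsExtremalPolyFor (p α : ℝ) (k : ℂ → ℂ) (n : ℕ) (Q : Polynomial ℂ) : Prop :=
  Q.natDegree ≤ n ∧ bNorm p α (fun z => Q.eval z) = 1 ∧
    ∀ P : Polynomial ℂ, P.natDegree ≤ n → bNorm p α (fun z => P.eval z) ≤ 1 →
      (pairing α (fun z => P.eval z) k).re ≤ (pairing α (fun z => Q.eval z) k).re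

/-- The functions `H_k`: `H_0(t) = h(t)/t²` with `h(t) = (cos t - cos 2t)/2`, and
`H_k(t) = ∫_t^∞ H_{k-1}(x) dx`. -/
def Hf : ℕ → ℝ → ℝ
  | 0, t => ((Real.cos t - Real.cos (2*t)) / 2) / t ^ 2
  | (k+1), t => ∫ x in Set.Ioi t, Hf k x

/-- The constants `C_k = (4/π) ∫_0^∞ |H_k(t)| dt`. -/
def Cc (k : ℕ) : ℝ := 4 / Real.pi * ∫ t in Set.Ioi (0:ℝ), |Hf k t|

/-- The constant `A_γ = (2^{1+γ}/π) ∫_0^∞ |cos t - cos 2t| t^{γ-2} dt`. -/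
def Acoef (γ : ℝ) : ℝ :=
  2 ^ (1 + γ) / Real.pi *
    ∫ t in Set.Ioi (0:ℝ), |Real.cos t - Real.cos (2*t)| * t ^ (γ - 2)

/-- The constant `B̃_0 = C_2/π + π C_0`. -/
def Btil0 : ℝ := Cc 2 / Real.pi + Real.pi * Cc 0

/-! ### Uniform convexity of `L^p` for `1 < p < 2` -/

/-- The second derivative of `r ^ p` is at least `p (p - 1) W ^ (p - 2)` on `(0, W]`, since
`p < 2`. -/
lemma convexOn_rpow_sub_sq {p W : ℝ} (hp1 : 1 < p) (hp2 : p < 2) :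
    ConvexOn ℝ (Icc 0 W) (fun r => r ^ p - p * (p - 1) / 2 * W ^ (p - 2) * r ^ 2) := by
  have hd : ∀ r : ℝ, HasDerivAt (fun r => r ^ p - p * (p - 1) / 2 * W ^ (p - 2) * r ^ 2)
      (p * r ^ (p - 1) - p * (p - 1) * W ^ (p - 2) * r) r := by
    intro r
    have h1 := Real.hasDerivAt_rpow_const (x := r) (p := p) (Or.inr hp1.le)
    have h2 := (hasDerivAt_pow 2 r).const_mul (p * (p - 1) / 2 * W ^ (p - 2))
    convert! h1.sub h2 using 1
    simp; ring
  have hdd : ∀ r ∈ Ioo 0 W, HasDerivAt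
      (fun r => p * r ^ (p - 1) - p * (p - 1) * W ^ (p - 2) * r)
      (p * ((p - 1) * r ^ (p - 2)) - p * (p - 1) * W ^ (p - 2)) r := by
    intro r hr
    have h1 := (Real.hasDerivAt_rpow_const (x := r) (p := p - 1) (Or.inl hr.1.ne')).const_mul p
    have h2 := (hasDerivAt_id r).const_mul (p * (p - 1) * W ^ (p - 2))
    convert! h1.sub h2 using 1
    rw [show p - 1 - 1 = p - 2 by ring]; simp
  have hde : deriv (fun r => r ^ p - p * (p - 1) / 2 * W ^ (p - 2) * r ^ 2) =
      fun r => p * r ^ (p - 1) - p * (p - 1) * W ^ (p - 2) * r :=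
    funext fun r => (hd r).deriv
  refine MonotoneOn.convexOn_of_deriv (convex_Icc 0 W)
    (fun r _ => (hd r).continuousAt.continuousWithinAt)
    (fun r _ => (hd r).differentiableAt.differentiableWithinAt) ?_
  rw [hde, interior_Icc]
  refine monotoneOn_of_deriv_nonneg (convex_Ioo 0 W)
    (fun r hr => (hdd r hr).continuousAt.continuousWithinAt) ?_ ?_
  · rw [interior_Ioo]
    exact fun r hr => (hdd r hr).differentiableAt.differentiableWithinAt
  · rw [interior_Ioo]
    intro r hr
    rw [(hdd r hr).deriv]
    have : W ^ (p - 2) ≤ r ^ (p - 2) :=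
      Real.rpow_le_rpow_of_nonpos hr.1 hr.2.le (by linarith)
    have h3 : 0 ≤ p * (p - 1) := mul_nonneg (by linarith) (by linarith)
    nlinarith [mul_le_mul_of_nonneg_left this h3]

/-- On the disc `‖z‖ ≤ W` the function `‖z‖ ^ p` is strongly convex with modulus
`p (p - 1) W ^ (p - 2)`: after subtracting the matching multiple of `‖z‖ ^ 2` it is still a
convex increasing function of `‖z‖`, and for `‖z‖ ^ 2` one has the parallelogram law. -/
lemma norm_rpow_midpoint {p W : ℝ} (hp1 : 1 < p) (hp2 : p < 2) (hW : 0 < W) {z w : ℂ}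
    (hz : ‖z‖ ≤ W) (hw : ‖w‖ ≤ W) :
    ‖(z + w) / 2‖ ^ p + p * (p - 1) / 2 * (W ^ (p - 2) * ‖(z - w) / 2‖ ^ 2)
      ≤ (‖z‖ ^ p + ‖w‖ ^ p) / 2 := by
  have hpar : ‖(z + w) / 2‖ ^ 2 + ‖(z - w) / 2‖ ^ 2 = (‖z‖ ^ 2 + ‖w‖ ^ 2) / 2 := by
    have := parallelogram_law_with_norm ℝ z w
    simp only [norm_div, Complex.norm_two]
    nlinarith
  have hmid : ‖(z + w) / 2‖ ≤ (‖z‖ + ‖w‖) / 2 := by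
    rw [norm_div, Complex.norm_two]
    linarith [norm_add_le z w]
  have hconv := (convexOn_rpow_sub_sq hp1 hp2).2 (⟨norm_nonneg z, hz⟩ : ‖z‖ ∈ Icc 0 W)
    (⟨norm_nonneg w, hw⟩ : ‖w‖ ∈ Icc 0 W) (by norm_num : (0 : ℝ) ≤ 1 / 2)
    (by norm_num : (0 : ℝ) ≤ 1 / 2) (by norm_num)
  have hmono : ∀ a b : ℝ, 0 ≤ a → a ≤ b → b ≤ W →
      a ^ p - p * (p - 1) / 2 * W ^ (p - 2) * a ^ 2 ≤
      b ^ p - p * (p - 1) / 2 * W ^ (p - 2) * b ^ 2 := by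
    intro a b ha hab hb
    have hd : ∀ r : ℝ, HasDerivAt (fun r => r ^ p - p * (p - 1) / 2 * W ^ (p - 2) * r ^ 2)
        (p * r ^ (p - 1) - p * (p - 1) * W ^ (p - 2) * r) r := by
      intro r
      have h1 := Real.hasDerivAt_rpow_const (x := r) (p := p) (Or.inr hp1.le)
      have h2 := (hasDerivAt_pow 2 r).const_mul (p * (p - 1) / 2 * W ^ (p - 2))
      convert! h1.sub h2 using 1
      simp; ring
    refine monotoneOn_of_deriv_nonneg (convex_Icc 0 W)
      (fun r _ => (hd r).continuousAt.continuousWithinAt)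
      (fun r _ => (hd r).differentiableAt.differentiableWithinAt) ?_
      ⟨ha, hab.trans hb⟩ ⟨ha.trans hab, hb⟩ hab
    rw [interior_Icc]
    intro r hr
    rw [(hd r).deriv]
    have h1 : W ^ (p - 2) ≤ r ^ (p - 2) :=
      Real.rpow_le_rpow_of_nonpos hr.1 hr.2.le (by linarith)
    have h2 : r ^ (p - 1) = r ^ (p - 2) * r := by
      rw [← Real.rpow_add_one hr.1.ne']; congr 1; ring
    rw [h2]
    have h3 : W ^ (p - 2) * r ≤ r ^ (p - 2) * r := mul_le_mul_of_nonneg_right h1 hr.1.le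
    have h4 : 0 ≤ W ^ (p - 2) * r := mul_nonneg (Real.rpow_nonneg hW.le _) hr.1.le
    have h5 : (p - 1) * (W ^ (p - 2) * r) ≤ 1 * (W ^ (p - 2) * r) :=
      mul_le_mul_of_nonneg_right (by linarith) h4
    nlinarith
  have h := hmono _ _ (norm_nonneg _) hmid (by linarith)
  simp only [smul_eq_mul] at hconv
  rw [show 1 / 2 * ‖z‖ + 1 / 2 * ‖w‖ = (‖z‖ + ‖w‖) / 2 by ring] at hconv
  have h6 : p * (p - 1) / 2 * (W ^ (p - 2) * ‖(z - w) / 2‖ ^ 2) =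
      p * (p - 1) / 2 * W ^ (p - 2) * ((‖z‖ ^ 2 + ‖w‖ ^ 2) / 2)
        - p * (p - 1) / 2 * W ^ (p - 2) * ‖(z + w) / 2‖ ^ 2 := by
    rw [← hpar]; ring
  rw [h6]
  linarith

lemma two_rpow_le_inv {p : ℝ} (hp1 : 1 < p) (hp2 : p < 2) :
    (2 : ℝ) ^ ((2 - p) / p) ≤ 1 / (p - 1) := by
  have h1 : (2 : ℝ) ^ ((2 - p) / p) ≤ 2 ^ (2 - p) := by
    apply Real.rpow_le_rpow_of_exponent_le (by norm_num)
    exact div_le_self (by linarith) hp1.le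
  have h2 : (1 + 1 : ℝ) ^ (2 - p) ≤ 1 + (2 - p) * 1 :=
    rpow_one_add_le_one_add_mul_self (by norm_num) (by linarith) (by linarith)
  rw [le_div_iff₀ (by linarith)]
  norm_num at h2
  nlinarith

/-- Quantitative uniform convexity: if `f`, `g` lie in the unit ball of `L^p` and their midpoint
almost has norm one, then half their difference is small. -/
lemma uniform_convexity {X : Type*} [MeasurableSpace X] {μ : Measure X} {p δ : ℝ}
    (hp1 : 1 < p) (hp2 : p < 2) (hδ : 0 ≤ δ) {f g : X → ℂ} (hfm : Measurable f)
    (hgm : Measurable g)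
    (hf : Integrable (fun x => ‖f x‖ ^ p) μ) (hg : Integrable (fun x => ‖g x‖ ^ p) μ)
    (hf1 : ∫ x, ‖f x‖ ^ p ∂μ ≤ 1) (hg1 : ∫ x, ‖g x‖ ^ p ∂μ ≤ 1)
    (hmid : 1 - p * δ ≤ ∫ x, ‖(f x + g x) / 2‖ ^ p ∂μ) :
    ((∫ x, ‖(f x - g x) / 2‖ ^ p ∂μ) ^ (1 / p)) ^ 4 ≤ 2 * δ / (p - 1) ^ 2 := by
  have hp0 : 0 < p := by linarith
  set W : X → ℝ := fun x => max ‖f x‖ ‖g x‖ with hWdef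
  have hW0 : ∀ x, 0 ≤ W x := fun x => (norm_nonneg _).trans (le_max_left _ _)
  have hWm : Measurable W := hfm.norm.max hgm.norm
  set b : X → ℝ := fun x => ‖(f x - g x) / 2‖ with hbdef
  have hb0 : ∀ x, 0 ≤ b x := fun x => norm_nonneg _
  have hbm : Measurable b := ((hfm.sub hgm).div_const 2).norm
  have hbW : ∀ x, b x ≤ W x := by
    intro x
    simp only [hbdef, norm_div, Complex.norm_two]
    have := norm_sub_le (f x) (g x)
    have := le_max_left ‖f x‖ ‖g x‖
    have := le_max_right ‖f x‖ ‖g x‖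
    simp only [hWdef]; linarith
  have haW : ∀ x, ‖(f x + g x) / 2‖ ≤ W x := by
    intro x
    simp only [norm_div, Complex.norm_two]
    have := norm_add_le (f x) (g x)
    have := le_max_left ‖f x‖ ‖g x‖
    have := le_max_right ‖f x‖ ‖g x‖
    simp only [hWdef]; linarith
  have hWp : ∀ x, W x ^ p ≤ ‖f x‖ ^ p + ‖g x‖ ^ p := by
    intro x
    have h1 := Real.rpow_nonneg (norm_nonneg (f x)) p
    have h2 := Real.rpow_nonneg (norm_nonneg (g x)) p
    rcases max_choice ‖f x‖ ‖g x‖ with h | h <;> simp only [hWdef, h] <;> linarith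
  have hWi : Integrable (fun x => W x ^ p) μ := by
    refine (hf.add hg).mono' (hWm.pow_const p).aestronglyMeasurable (.of_forall fun x => ?_)
    rw [Real.norm_of_nonneg (Real.rpow_nonneg (hW0 x) _)]
    exact hWp x
  have hW2 : ∫ x, W x ^ p ∂μ ≤ 2 := by
    calc ∫ x, W x ^ p ∂μ ≤ ∫ x, (‖f x‖ ^ p + ‖g x‖ ^ p) ∂μ :=
          integral_mono hWi (hf.add hg) hWp
      _ ≤ 2 := by rw [integral_add hf hg]; linarith
  have hai : Integrable (fun x => ‖(f x + g x) / 2‖ ^ p) μ := by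
    refine hWi.mono' ((((hfm.add hgm).div_const 2).norm).pow_const p).aestronglyMeasurable
      (.of_forall fun x => ?_)
    rw [Real.norm_of_nonneg (by positivity)]
    exact Real.rpow_le_rpow (norm_nonneg _) (haW x) hp0.le
  have hbi : Integrable (fun x => b x ^ p) μ := by
    refine hWi.mono' (hbm.pow_const p).aestronglyMeasurable (.of_forall fun x => ?_)
    rw [Real.norm_of_nonneg (Real.rpow_nonneg (hb0 x) _)]
    exact Real.rpow_le_rpow (hb0 x) (hbW x) hp0.le
  -- the weighted square function `V = b² W^{p-2}` whose integral the midpoint gap controls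
  set V : X → ℝ := fun x => W x ^ (p - 2) * b x ^ 2 with hVdef
  have hV0 : ∀ x, 0 ≤ V x := fun x => mul_nonneg (Real.rpow_nonneg (hW0 x) _) (sq_nonneg _)
  have hVm : Measurable V := (hWm.pow_const _).mul (hbm.pow_const 2)
  have hpt : ∀ x, ‖(f x + g x) / 2‖ ^ p + p * (p - 1) / 2 * V x
      ≤ (‖f x‖ ^ p + ‖g x‖ ^ p) / 2 := by
    intro x
    rcases (hW0 x).eq_or_lt with h | h
    · have e1 : b x = 0 := le_antisymm (by simpa [← h] using hbW x) (hb0 x)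
      have e2 : ‖(f x + g x) / 2‖ = 0 := le_antisymm (by simpa [← h] using haW x) (norm_nonneg _)
      rw [e2, Real.zero_rpow hp0.ne']
      simp only [hVdef, e1]
      have h1 := Real.rpow_nonneg (norm_nonneg (f x)) p
      have h2 := Real.rpow_nonneg (norm_nonneg (g x)) p
      simp; linarith
    · exact norm_rpow_midpoint hp1 hp2 h (le_max_left _ _) (le_max_right _ _)
  have hVi : Integrable V μ := by
    have hc : 0 < p * (p - 1) / 2 := by
      have : 0 < p - 1 := by linarith
      positivity
    refine ((hf.add hg).const_mul ((p * (p - 1) / 2)⁻¹)).mono' hVm.aestronglyMeasurable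
      (.of_forall fun x => ?_)
    rw [Real.norm_of_nonneg (hV0 x), ← div_eq_inv_mul, le_div_iff₀ hc]
    have := hpt x
    have h0 : 0 ≤ ‖(f x + g x) / 2‖ ^ p := by positivity
    have h1 := Real.rpow_nonneg (norm_nonneg (f x)) p
    have h2 := Real.rpow_nonneg (norm_nonneg (g x)) p
    simp only [Pi.add_apply]
    linarith
  have hp10 : 0 < p - 1 := by linarith
  have hVint : ∫ x, V x ∂μ ≤ 2 * δ / (p - 1) := by
    have h := integral_mono (hai.add (hVi.const_mul (p * (p - 1) / 2)))
      ((hf.add hg).div_const 2) (fun x => hpt x)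
    simp only [Pi.add_apply] at h
    rw [integral_add hai (hVi.const_mul _), integral_const_mul, integral_div,
      integral_add hf hg] at h
    rw [le_div_iff₀ hp10]
    have h2 : p * (p - 1) / 2 * ∫ x, V x ∂μ ≤ p * δ := by linarith
    have h3 : p * ((∫ x, V x ∂μ) * (p - 1)) ≤ p * (2 * δ) := by linarith
    exact le_of_mul_le_mul_left h3 hp0
  have hB0 : 0 ≤ ∫ x, b x ^ p ∂μ := integral_nonneg fun x => Real.rpow_nonneg (hb0 x) _
  have hB1 : ∫ x, b x ^ p ∂μ ≤ 1 := by
    have hpt' : ∀ x, b x ^ p ≤ (‖f x‖ ^ p + ‖g x‖ ^ p) / 2 := by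
      intro x
      have h1 : b x ≤ (‖f x‖ + ‖g x‖) / 2 := by
        simp only [hbdef, norm_div, Complex.norm_two]
        linarith [norm_sub_le (f x) (g x)]
      have h2 := (convexOn_rpow hp1.le).2 (norm_nonneg (f x) : ‖f x‖ ∈ Ici (0:ℝ))
        (norm_nonneg (g x) : ‖g x‖ ∈ Ici (0:ℝ)) (by norm_num : (0 : ℝ) ≤ 1 / 2)
        (by norm_num : (0 : ℝ) ≤ 1 / 2) (by norm_num)
      simp only [smul_eq_mul] at h2
      rw [show 1 / 2 * ‖f x‖ + 1 / 2 * ‖g x‖ = (‖f x‖ + ‖g x‖) / 2 by ring] at h2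
      linarith [Real.rpow_le_rpow (hb0 x) h1 hp0.le]
    have h := integral_mono hbi ((hf.add hg).div_const 2) hpt'
    simp only [Pi.add_apply] at h
    rw [integral_div, integral_add hf hg] at h
    linarith
  have hB : ∫ x, b x ^ p ∂μ ≤ (2 * δ / (p - 1)) ^ (p / 2) * 2 ^ (1 - p / 2) := by
    have hS0 : 0 ≤ 2 * δ / (p - 1) := by positivity
    rcases hS0.eq_or_lt with h | h
    · have hVz : V =ᵐ[μ] 0 := (integral_eq_zero_iff_of_nonneg hV0 hVi).1
        (le_antisymm (by rw [h]; exact hVint) (integral_nonneg hV0))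
      have : (fun x => b x ^ p) =ᵐ[μ] 0 := by
        filter_upwards [hVz] with x hx
        have hbx : b x = 0 := by
          rcases mul_eq_zero.1 hx with h' | h'
          · rw [Real.rpow_eq_zero (hW0 x) (by linarith)] at h'
            exact le_antisymm (by simpa [h'] using hbW x) (hb0 x)
          · exact pow_eq_zero_iff (by norm_num) |>.1 h'
        simp [hbx, hp0.ne']
      rw [integral_congr_ae this]
      simp only [Pi.zero_apply, integral_zero]
      positivity
    · set S := 2 * δ / (p - 1)
      have hpt' : ∀ x, b x ^ p ≤ S ^ (p / 2) * 2 ^ (1 - p / 2) *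
          (p / 2 * (V x / S) + (1 - p / 2) * (W x ^ p / 2)) := by
        intro x
        have hy := Real.geom_mean_le_arith_mean2_weighted (w₁ := p / 2) (w₂ := 1 - p / 2)
          (p₁ := V x / S) (p₂ := W x ^ p / 2) (by positivity) (by linarith)
          (div_nonneg (hV0 x) h.le) (div_nonneg (Real.rpow_nonneg (hW0 x) _) (by norm_num))
          (by ring)
        have he : b x ^ p = V x ^ (p / 2) * (W x ^ p) ^ (1 - p / 2) := by
          rcases (hW0 x).eq_or_lt with h' | h'
          · have e1 : b x = 0 := le_antisymm (by simpa [← h'] using hbW x) (hb0 x)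
            have : V x = 0 := by simp [hVdef, e1]
            rw [e1, this, Real.zero_rpow hp0.ne', Real.zero_rpow (by positivity), zero_mul]
          · simp only [hVdef]
            rw [Real.mul_rpow (Real.rpow_nonneg (hW0 x) _) (sq_nonneg _), ← Real.rpow_mul (hW0 x),
              ← Real.rpow_mul (hW0 x), ← Real.rpow_natCast, ← Real.rpow_mul (hb0 x),
              mul_right_comm, ← Real.rpow_add h']
            rw [show (p - 2) * (p / 2) + p * (1 - p / 2) = 0 by ring, Real.rpow_zero, one_mul]
            congr 1; push_cast; ring
        rw [he]
        rw [Real.div_rpow (hV0 x) h.le, Real.div_rpow (Real.rpow_nonneg (hW0 x) _) (by norm_num)]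
          at hy
        have hS : 0 < S ^ (p / 2) := Real.rpow_pos_of_pos h _
        have h2 : (0:ℝ) < 2 ^ (1 - p / 2) := by positivity
        rw [div_mul_div_comm, div_le_iff₀ (mul_pos hS h2)] at hy
        linarith
      have hi : Integrable (fun x => p / 2 * (V x / S) + (1 - p / 2) * (W x ^ p / 2)) μ :=
        ((hVi.div_const S).const_mul _).add ((hWi.div_const 2).const_mul _)
      have hle := integral_mono hbi (hi.const_mul (S ^ (p / 2) * 2 ^ (1 - p / 2))) hpt'
      rw [integral_const_mul] at hle
      refine hle.trans ?_
      rw [integral_add ((hVi.div_const S).const_mul _) ((hWi.div_const 2).const_mul _),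
        integral_const_mul, integral_const_mul, integral_div, integral_div]
      refine mul_le_of_le_one_right (by positivity) ?_
      have h1 : (∫ x, V x ∂μ) / S ≤ 1 := (div_le_one h).2 hVint
      have h2 : (∫ x, W x ^ p ∂μ) / 2 ≤ 1 := by linarith
      have h3 := mul_le_mul_of_nonneg_left h1 (by positivity : 0 ≤ p / 2)
      have h4 := mul_le_mul_of_nonneg_left h2 (by linarith : 0 ≤ 1 - p / 2)
      linarith
  set B := ∫ x, b x ^ p ∂μ
  have hroot1 : B ^ (1 / p) ≤ 1 := Real.rpow_le_one hB0 hB1 (by positivity)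
  have hroot0 : 0 ≤ B ^ (1 / p) := Real.rpow_nonneg hB0 _
  have hsq : (B ^ (1 / p)) ^ 2 ≤ 2 * δ / (p - 1) ^ 2 := by
    have hS0 : 0 ≤ 2 * δ / (p - 1) := by positivity
    have e : (B ^ (1 / p)) ^ 2 = B ^ (2 / p) := by
      rw [← Real.rpow_natCast, ← Real.rpow_mul hB0]; congr 1; push_cast; ring
    rw [e]
    calc B ^ (2 / p) ≤ ((2 * δ / (p - 1)) ^ (p / 2) * 2 ^ (1 - p / 2)) ^ (2 / p) :=
          Real.rpow_le_rpow hB0 hB (by positivity)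
      _ = 2 * δ / (p - 1) * 2 ^ ((2 - p) / p) := by
          rw [Real.mul_rpow (by positivity) (by positivity), ← Real.rpow_mul hS0,
            ← Real.rpow_mul (by norm_num)]
          rw [show p / 2 * (2 / p) = 1 by field_simp, Real.rpow_one]
          congr 2; field_simp
      _ ≤ 2 * δ / (p - 1) * (1 / (p - 1)) :=
          mul_le_mul_of_nonneg_left (two_rpow_le_inv hp1 hp2) hS0
      _ = 2 * δ / (p - 1) ^ 2 := by field_simp
  calc (B ^ (1 / p)) ^ 4 ≤ (B ^ (1 / p)) ^ 2 :=
        pow_le_pow_of_le_one hroot0 hroot1 (by norm_num)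
    _ ≤ _ := hsq

/-! ### Lower bounds for the constants `A_γ` and `B̃_0` -/

lemma abs_cos_sub_cos_le (t : ℝ) : |Real.cos t - Real.cos (2 * t)| ≤ 2 * t ^ 2 := by
  have h1 := Real.one_sub_sq_div_two_le_cos (x := t)
  have h2 := Real.one_sub_sq_div_two_le_cos (x := 2 * t)
  have h3 := Real.cos_le_one t
  have h4 := Real.cos_le_one (2 * t)
  rw [abs_le]
  constructor <;> nlinarith [sq_nonneg t]

lemma le_cos_sub_cos {t : ℝ} (h0 : 0 ≤ t) (h1 : t ≤ 3 / 2) :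
    t ^ 2 * (3 / 2 - 5 / 8 * t ^ 2) ≤ Real.cos t - Real.cos (2 * t) := by
  have hc := Real.one_sub_sq_div_two_le_cos (x := t)
  have hs : t ^ 2 / 2 - t ^ 4 / 24 ≤ 1 - Real.cos t := by
    rcases h0.eq_or_lt with h | h
    · simp [← h]
    have h2 := Real.sin_gt_sub_cube (x := t / 2) (by linarith)
    have h3 : Real.cos t = 1 - 2 * Real.sin (t / 2) ^ 2 := by
      rw [show t = 2 * (t / 2) by ring, Real.cos_two_mul, Real.cos_sq']; ring_nf
    have h4 : 0 ≤ t / 2 - (t / 2) ^ 3 / 6 := by nlinarith [mul_pos h h]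
    have h5 : (t / 2 - (t / 2) ^ 3 / 6) ^ 2 ≤ Real.sin (t / 2) ^ 2 :=
      pow_le_pow_left₀ h4 h2.le 2
    rw [h3]
    nlinarith [sq_nonneg (t ^ 3)]
  have e : Real.cos t - Real.cos (2 * t) = (1 - Real.cos t) * (1 + 2 * Real.cos t) := by
    rw [Real.cos_two_mul]; ring
  have ht2 : t ^ 2 ≤ 9 / 4 := by nlinarith
  have h6 : 0 ≤ t ^ 2 / 2 - t ^ 4 / 24 := by nlinarith [sq_nonneg t]
  have h7 : 0 ≤ 3 - t ^ 2 := by linarith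
  have h8 : (t ^ 2 / 2 - t ^ 4 / 24) * (3 - t ^ 2)
      ≤ (1 - Real.cos t) * (1 + 2 * Real.cos t) :=
    mul_le_mul hs (by linarith) h7 (h6.trans hs)
  rw [e]
  nlinarith [sq_nonneg (t ^ 3)]

lemma integrableOn_cos_kernel {γ : ℝ} (h0 : 0 ≤ γ) (h1 : γ < 1) :
    IntegrableOn (fun t : ℝ => |Real.cos t - Real.cos (2 * t)| * t ^ (γ - 2)) (Ioi 0) := by
  have hm : Measurable (fun t : ℝ => |Real.cos t - Real.cos (2 * t)| * t ^ (γ - 2)) := by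
    fun_prop
  rw [← Ioc_union_Ioi_eq_Ioi (zero_le_one' ℝ)]
  refine IntegrableOn.union ?_ ?_
  · refine Measure.integrableOn_of_bounded (M := 2) (by simp) hm.aestronglyMeasurable ?_
    filter_upwards [ae_restrict_mem measurableSet_Ioc] with t ht
    have htp : 0 < t := ht.1
    rw [Real.norm_of_nonneg (by positivity)]
    calc |Real.cos t - Real.cos (2 * t)| * t ^ (γ - 2) ≤ 2 * t ^ 2 * t ^ (γ - 2) := by
          gcongr; exact abs_cos_sub_cos_le t
      _ = 2 * t ^ γ := by
          rw [Real.rpow_sub htp, Real.rpow_two]; field_simp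
      _ ≤ 2 := by
          have := Real.rpow_le_one htp.le ht.2 h0
          linarith
  · refine ((integrableOn_Ioi_rpow_of_lt (by linarith : γ - 2 < -1) one_pos).const_mul 2).mono'
      hm.aestronglyMeasurable ?_
    filter_upwards [ae_restrict_mem measurableSet_Ioi] with t ht
    have htp : 0 < t := one_pos.trans ht
    rw [Real.norm_of_nonneg (by positivity)]
    gcongr
    rw [abs_le]
    constructor <;> linarith [Real.neg_one_le_cos t, Real.cos_le_one t,
      Real.neg_one_le_cos (2 * t), Real.cos_le_one (2 * t)]

/-- The part of the integral over `[0, 3/2]`, where `cos t - cos 2t` is positive, already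
suffices. -/
lemma le_integral_cos_kernel {γ : ℝ} (h0 : 0 ≤ γ) (h1 : γ < 1) :
    39 / 50 ≤ ∫ t in Ioi (0 : ℝ), |Real.cos t - Real.cos (2 * t)| * t ^ (γ - 2) := by
  have hi := integrableOn_cos_kernel h0 h1
  set f : ℝ → ℝ := fun t => |Real.cos t - Real.cos (2 * t)| * t ^ (γ - 2) with hf
  have hsub : Ioc (0 : ℝ) (3 / 2) ⊆ Ioi 0 := fun t ht => ht.1
  have hle : ∫ t in Ioc (0 : ℝ) (3 / 2), f t ≤ ∫ t in Ioi (0 : ℝ), f t := by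
    refine setIntegral_mono_set hi ?_ hsub.eventuallyLE
    filter_upwards [ae_restrict_mem measurableSet_Ioi] with t ht
    exact mul_nonneg (abs_nonneg _) (Real.rpow_nonneg (le_of_lt ht) _)
  refine le_trans ?_ hle
  rw [← intervalIntegral.integral_of_le (by norm_num)]
  have i1 : IntervalIntegrable f volume 0 1 :=
    (intervalIntegrable_iff_integrableOn_Ioc_of_le zero_le_one).2
      (hi.mono_set fun t ht => ht.1)
  have i2 : IntervalIntegrable f volume 1 (3 / 2) :=
    (intervalIntegrable_iff_integrableOn_Ioc_of_le (by norm_num)).2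
      (hi.mono_set fun t ht => one_pos.trans ht.1)
  rw [← intervalIntegral.integral_add_adjacent_intervals i1 i2]
  have hlow : ∀ t : ℝ, 0 < t → t ≤ 3 / 2 → t ^ γ * (3 / 2 - 5 / 8 * t ^ 2) ≤ f t := by
    intro t ht ht'
    have e : t ^ γ * (3 / 2 - 5 / 8 * t ^ 2)
        = t ^ 2 * (3 / 2 - 5 / 8 * t ^ 2) * t ^ (γ - 2) := by
      rw [Real.rpow_sub ht, Real.rpow_two]; field_simp
    rw [e, hf]
    exact mul_le_mul_of_nonneg_right ((le_cos_sub_cos ht.le ht').trans (le_abs_self _))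
      (Real.rpow_nonneg ht.le _)
  have b1 : ∫ t in (0 : ℝ)..1, t * (3 / 2 - 5 / 8 * t ^ 2) ≤ ∫ t in (0 : ℝ)..1, f t := by
    refine intervalIntegral.integral_mono_on_of_le_Ioo zero_le_one
      (Continuous.intervalIntegrable (by fun_prop) _ _) i1 fun t ht => ?_
    refine le_trans ?_ (hlow t ht.1 (by linarith [ht.2]))
    have h3 : t ≤ t ^ γ := by
      simpa using Real.rpow_le_rpow_of_exponent_ge ht.1 ht.2.le h1.le
    refine mul_le_mul_of_nonneg_right h3 ?_
    nlinarith [ht.1, ht.2]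
  have b2 : ∫ t in (1 : ℝ)..(3 / 2), (3 / 2 - 5 / 8 * t ^ 2)
      ≤ ∫ t in (1 : ℝ)..(3 / 2), f t := by
    refine intervalIntegral.integral_mono_on_of_le_Ioo (by norm_num)
      (Continuous.intervalIntegrable (by fun_prop) _ _) i2 fun t ht => ?_
    refine le_trans ?_ (hlow t (by linarith [ht.1]) ht.2.le)
    have h3 : 1 ≤ t ^ γ := Real.one_le_rpow ht.1.le h0
    have h4 : (0 : ℝ) ≤ 3 / 2 - 5 / 8 * t ^ 2 := by
      have := ht.1
      have := ht.2
      nlinarith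
    nlinarith
  have c1 : ∫ t in (0 : ℝ)..1, t * (3 / 2 - 5 / 8 * t ^ 2) = 19 / 32 := by
    have : ∀ t : ℝ, t * (3 / 2 - 5 / 8 * t ^ 2) = 3 / 2 * t - 5 / 8 * t ^ 3 :=
      fun t => by ring
    simp_rw [this]
    rw [intervalIntegral.integral_sub (Continuous.intervalIntegrable (by fun_prop) _ _)
      (Continuous.intervalIntegrable (by fun_prop) _ _), intervalIntegral.integral_const_mul,
      intervalIntegral.integral_const_mul, integral_id, integral_pow]
    norm_num
  have c2 : ∫ t in (1 : ℝ)..(3 / 2), (3 / 2 - 5 / 8 * t ^ 2) = 49 / 192 := by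
    rw [intervalIntegral.integral_sub (Continuous.intervalIntegrable (by fun_prop) _ _)
      (Continuous.intervalIntegrable (by fun_prop) _ _), intervalIntegral.integral_const_mul,
      intervalIntegral.integral_const, integral_pow]
    norm_num
  rw [c1] at b1
  rw [c2] at b2
  norm_num at b1 b2 ⊢
  linarith

lemma Acoef_nonneg {γ : ℝ} (h0 : 0 ≤ γ) (h1 : γ < 1) : 0 ≤ Acoef γ := by
  have := le_integral_cos_kernel h0 h1
  unfold Acoef
  have h : (0 : ℝ) ≤ ∫ t in Ioi (0 : ℝ), |Real.cos t - Real.cos (2 * t)| * t ^ (γ - 2) := by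
    linarith
  positivity

/-- With `A_{β/2} = 2 · 2^{β/2} I / π` both sides carry a factor `2^β`, and what remains is
`(π²/4)^β ≤ (π²/4)² ≤ 128 I² / π²`. -/
lemma rpow_le_Acoef_sq {β : ℝ} (h0 : 0 < β) (h1 : β < 2) :
    (Real.pi ^ 2 / 2) ^ β ≤ 32 * Acoef (β / 2) ^ 2 := by
  have hI := le_integral_cos_kernel (γ := β / 2) (by linarith) (by linarith)
  unfold Acoef
  set I := ∫ t in Ioi (0 : ℝ), |Real.cos t - Real.cos (2 * t)| * t ^ (β / 2 - 2)
  have hpi : 3 < Real.pi := Real.pi_gt_three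
  have hpi2 : Real.pi < 3.15 := Real.pi_lt_d2
  have e1 : (2 : ℝ) ^ (1 + β / 2) = 2 * 2 ^ (β / 2) := by
    rw [Real.rpow_add two_pos, Real.rpow_one]
  have e2 : ((2 : ℝ) ^ (β / 2)) ^ 2 = 2 ^ β := by
    rw [← Real.rpow_natCast, ← Real.rpow_mul (by norm_num)]; congr 1; push_cast; ring
  have e3 : (Real.pi ^ 2 / 2) ^ β = 2 ^ β * (Real.pi ^ 2 / 4) ^ β := by
    rw [← Real.mul_rpow (by norm_num) (by positivity)]; congr 1; ring
  have e4 : (Real.pi ^ 2 / 4) ^ β ≤ (Real.pi ^ 2 / 4) ^ 2 := by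
    exact (Real.rpow_le_rpow_of_exponent_le (by nlinarith : 1 ≤ Real.pi ^ 2 / 4) h1.le).trans_eq
      (Real.rpow_two _)
  have e5 : 32 * (2 ^ (1 + β / 2) / Real.pi * I) ^ 2 = 2 ^ β * (128 * I ^ 2 / Real.pi ^ 2) := by
    rw [e1, ← e2]; field_simp; ring
  rw [e3, e5]
  refine mul_le_mul_of_nonneg_left (e4.trans ?_) (by positivity)
  rw [le_div_iff₀ (by positivity)]
  have h5 : (39 / 50 : ℝ) ^ 2 ≤ I ^ 2 := pow_le_pow_left₀ (by norm_num) hI 2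
  have h6 : Real.pi ^ 6 ≤ 3.15 ^ 6 := pow_le_pow_left₀ Real.pi_pos.le hpi2.le 6
  have h7 : (Real.pi ^ 2 / 4) ^ 2 * Real.pi ^ 2 = Real.pi ^ 6 / 16 := by ring
  rw [h7]
  norm_num at h5 h6
  linarith

lemma le_Btil0 : 39 / 25 ≤ Btil0 := by
  have hI := le_integral_cos_kernel (γ := 0) le_rfl one_pos
  have e : ∫ t in Ioi (0 : ℝ), |Hf 0 t| =
      (∫ t in Ioi (0 : ℝ), |Real.cos t - Real.cos (2 * t)| * t ^ ((0 : ℝ) - 2)) / 2 := by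
    rw [← integral_div]
    refine setIntegral_congr_fun measurableSet_Ioi fun t ht => ?_
    have ht' : 0 < t := ht
    simp only [Hf, abs_div]
    rw [zero_sub, Real.rpow_neg ht'.le, Real.rpow_two, abs_of_pos (by positivity : 0 < t ^ 2),
      abs_of_pos (by norm_num : (0 : ℝ) < 2)]
    field_simp
  have h2 : 0 ≤ Cc 2 / Real.pi := by
    unfold Cc
    have : 0 ≤ ∫ t in Ioi (0 : ℝ), |Hf 2 t| := integral_nonneg fun t => abs_nonneg _
    positivity
  have h3 : Real.pi * Cc 0 = 4 * ∫ t in Ioi (0 : ℝ), |Hf 0 t| := by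
    unfold Cc
    field_simp
  unfold Btil0
  rw [h3, e]
  linarith

lemma rpow_le_Btil0_sq : (Real.pi ^ 2 / 2) ^ (2 : ℝ) ≤ 32 * Btil0 ^ 2 := by
  have h := pow_le_pow_left₀ (by norm_num) le_Btil0 2
  have h6 : Real.pi ^ 4 ≤ 3.15 ^ 4 := pow_le_pow_left₀ Real.pi_pos.le Real.pi_lt_d2.le 4
  rw [Real.rpow_two, div_pow]
  norm_num at h h6 ⊢
  rw [← pow_mul]
  norm_num
  linarith

/-! ### The measure `dA_α` and its invariance under rotations -/

/-- The measure `dA_α` on the unit disc. -/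
def bMeas (α : ℝ) : Measure ℂ :=
  (volume.restrict unitDisc).withDensity fun z => ENNReal.ofReal (wt α z)

instance sFinite_bMeas (α : ℝ) : SFinite (bMeas α) := by
  unfold bMeas
  infer_instance

lemma measurableSet_unitDisc : MeasurableSet unitDisc := measurableSet_ball

lemma measurable_wt (α : ℝ) : Measurable (wt α) := by
  unfold wt
  exact ((measurable_const.sub (measurable_norm.pow_const 2)).pow_const α).const_mul _

lemma wt_nonneg {α : ℝ} (hα : -1 < α) {z : ℂ} (hz : z ∈ unitDisc) : 0 ≤ wt α z := by
  have h1 : ‖z‖ < 1 := by simpa [unitDisc] using hz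
  have h2 : 0 ≤ 1 - ‖z‖ ^ 2 := by nlinarith [norm_nonneg z]
  have h3 : 0 ≤ α + 1 := by linarith
  unfold wt
  positivity

lemma ae_mem_unitDisc (α : ℝ) : ∀ᵐ z ∂bMeas α, z ∈ unitDisc :=
  (withDensity_absolutelyContinuous _ _).ae_le (ae_restrict_mem measurableSet_unitDisc)

lemma integral_bMeas {E : Type*} [NormedAddCommGroup E] [NormedSpace ℝ E] {α : ℝ} (hα : -1 < α)
    (g : ℂ → E) : ∫ z, g z ∂bMeas α = ∫ z in unitDisc, wt α z • g z := by
  unfold bMeas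
  rw [integral_withDensity_eq_integral_toReal_smul (measurable_wt α).ennreal_ofReal (by simp)]
  refine setIntegral_congr_fun measurableSet_unitDisc fun z hz => ?_
  simp only [ENNReal.toReal_ofReal (wt_nonneg hα hz)]

lemma integrable_bMeas_iff {E : Type*} [NormedAddCommGroup E] [NormedSpace ℝ E] {α : ℝ}
    (hα : -1 < α) (g : ℂ → E) :
    Integrable g (bMeas α) ↔ IntegrableOn (fun z => wt α z • g z) unitDisc := by
  unfold bMeas
  rw [integrable_withDensity_iff_integrable_smul' (measurable_wt α).ennreal_ofReal (by simp)]
  refine integrable_congr ?_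
  filter_upwards [ae_restrict_mem measurableSet_unitDisc] with z hz
  rw [ENNReal.toReal_ofReal (wt_nonneg hα hz)]

lemma bNorm_eq {α : ℝ} (hα : -1 < α) (p : ℝ) (f : ℂ → ℂ) :
    bNorm p α f = (∫ z, ‖f z‖ ^ p ∂bMeas α) ^ (1 / p) := by
  unfold bNorm
  rw [integral_bMeas hα]
  simp_rw [smul_eq_mul, mul_comm]

lemma pairing_eq {α : ℝ} (hα : -1 < α) (f k : ℂ → ℂ) :
    pairing α f k = ∫ z, f z * (starRingEnd ℂ) (k z) ∂bMeas α := by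
  unfold pairing
  rw [integral_bMeas hα]
  simp_rw [Complex.real_smul, mul_comm]

lemma aestronglyMeasurable_bMeas {α : ℝ} {f : ℂ → ℂ} (hf : ContinuousOn f unitDisc) :
    AEStronglyMeasurable f (bMeas α) :=
  (hf.aestronglyMeasurable measurableSet_unitDisc).mono_ac (withDensity_absolutelyContinuous _ _)

lemma integrable_of_memAp {p α : ℝ} (hα : -1 < α) {f : ℂ → ℂ} (hf : MemAp p α f) :
    Integrable (fun z => ‖f z‖ ^ p) (bMeas α) := by
  rw [integrable_bMeas_iff hα]
  simpa only [smul_eq_mul, mul_comm] using hf.2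

lemma memAp_of_integrable {p α : ℝ} (hα : -1 < α) {f : ℂ → ℂ} (hd : DifferentiableOn ℂ f unitDisc)
    (hf : Integrable (fun z => ‖f z‖ ^ p) (bMeas α)) : MemAp p α f := by
  rw [integrable_bMeas_iff hα] at hf
  exact ⟨hd, by simpa only [smul_eq_mul, mul_comm] using hf⟩

lemma memLp_of_integrable {X : Type*} [MeasurableSpace X] {μ : Measure X} {p : ℝ} (hp : 0 < p)
    {f : X → ℂ} (hm : AEStronglyMeasurable f μ) (hf : Integrable (fun z => ‖f z‖ ^ p) μ) :
    MemLp f (ENNReal.ofReal p) μ := by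
  rw [← integrable_norm_rpow_iff hm (by simpa using hp) (by simp), ENNReal.toReal_ofReal hp.le]
  exact hf

lemma integrable_of_memLp {X : Type*} [MeasurableSpace X] {μ : Measure X} {p : ℝ} (hp : 0 < p)
    {f : X → ℂ} (hf : MemLp f (ENNReal.ofReal p) μ) : Integrable (fun z => ‖f z‖ ^ p) μ := by
  rw [← integrable_norm_rpow_iff hf.1 (by simpa using hp) (by simp), ENNReal.toReal_ofReal hp.le]
    at hf
  exact hf

/-- The rotation `z ↦ e^{it} z`. -/
def rot (t : ℝ) (z : ℂ) : ℂ := Complex.exp (t * I) * z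

@[simp] lemma norm_rot (t : ℝ) (z : ℂ) : ‖rot t z‖ = ‖z‖ := by
  simp [rot, Complex.norm_exp_ofReal_mul_I]

lemma rot_mem_unitDisc {t : ℝ} {z : ℂ} : rot t z ∈ unitDisc ↔ z ∈ unitDisc := by
  simp [unitDisc]

lemma rot_neg_rot (t : ℝ) (z : ℂ) : rot (-t) (rot t z) = z := by
  simp [rot, ← mul_assoc, ← Complex.exp_add]

lemma continuous_rot : Continuous (Function.uncurry rot) := by
  unfold rot Function.uncurry
  fun_prop

lemma measurePreserving_rot (α t : ℝ) : MeasurePreserving (rot t) (bMeas α) (bMeas α) := by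
  have h0 : MeasurePreserving (rot t) volume volume := by
    have h := (rotation (Circle.exp t)).measurePreserving
    have e : (rotation (Circle.exp t) : ℂ → ℂ) = rot t := by
      ext1 z
      simp [rot]
    rwa [e] at h
  have h1 : MeasurePreserving (rot t) (volume.restrict unitDisc) (volume.restrict unitDisc) := by
    have h := h0.restrict_preimage measurableSet_unitDisc
    have e : rot t ⁻¹' unitDisc = unitDisc := by
      ext z
      exact rot_mem_unitDisc
    rwa [e] at h
  refine ⟨h0.measurable, ?_⟩
  ext s hs
  rw [Measure.map_apply h0.measurable hs]
  unfold bMeas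
  rw [withDensity_apply _ hs, withDensity_apply _ (h0.measurable hs),
    ← h1.setLIntegral_comp_preimage hs (measurable_wt α).ennreal_ofReal]
  simp [wt]

/-- The map `(t, z) ↦ e^{it} z` pushes `ν ⊗ dA_α` to `dA_α`, for a probability measure `ν`. -/
lemma measurePreserving_rot_prod (α : ℝ) (ν : Measure ℝ) [IsProbabilityMeasure ν] :
    MeasurePreserving (fun x : ℝ × ℂ => rot x.1 x.2) (ν.prod (bMeas α)) (bMeas α) := by
  have h := (MeasurePreserving.id ν).skew_product (g := rot) continuous_rot.measurable
    (ae_of_all _ fun t => (measurePreserving_rot α t).map_eq)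
  exact measurePreserving_snd.comp h

lemma integral_rot {E : Type*} [NormedAddCommGroup E] [NormedSpace ℝ E] (α t : ℝ) {g : ℂ → E}
    (hg : AEStronglyMeasurable g (bMeas α)) :
    ∫ z, g (rot t z) ∂bMeas α = ∫ z, g z ∂bMeas α := by
  have h := measurePreserving_rot α t
  conv_rhs => rw [← h.map_eq]
  rw [integral_map h.aemeasurable (by rwa [h.map_eq])]

/-- Hölder's inequality for the pairing. -/
lemma norm_integral_mul_conj_le {X : Type*} [MeasurableSpace X] {μ : Measure X} {p q : ℝ}
    (hpq : p.HolderConjugate q) {f g : X → ℂ} (hf : MemLp f (ENNReal.ofReal p) μ)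
    (hg : MemLp g (ENNReal.ofReal q) μ) :
    ‖∫ x, f x * (starRingEnd ℂ) (g x) ∂μ‖
      ≤ (∫ x, ‖f x‖ ^ p ∂μ) ^ (1 / p) * (∫ x, ‖g x‖ ^ q ∂μ) ^ (1 / q) := by
  refine (norm_integral_le_integral_norm _).trans ?_
  simp_rw [norm_mul, RCLike.norm_conj]
  exact integral_mul_norm_le_Lp_mul_Lq hpq hf hg

/-- Young's inequality makes the pairing of an `L^p` and an `L^q` function integrable. -/
lemma integrable_mul_conj {X : Type*} [MeasurableSpace X] {μ : Measure X} {p q : ℝ}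
    (hpq : p.HolderConjugate q) {f g : X → ℂ} (hf : MemLp f (ENNReal.ofReal p) μ)
    (hg : MemLp g (ENNReal.ofReal q) μ) :
    Integrable (fun x => f x * (starRingEnd ℂ) (g x)) μ := by
  refine (((integrable_of_memLp hpq.pos hf).div_const p).add
    ((integrable_of_memLp hpq.symm.pos hg).div_const q)).mono'
    (hf.1.mul (Complex.continuous_conj.comp_aestronglyMeasurable hg.1)) (ae_of_all _ fun x => ?_)
  rw [norm_mul, RCLike.norm_conj]
  exact Real.young_inequality_of_nonneg (norm_nonneg _) (norm_nonneg _) hpq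

/-! ### A positive trigonometric kernel concentrated at the origin -/

lemma integral_exp_int (m : ℤ) :
    ∫ t in (-Real.pi)..Real.pi, Complex.exp (m * t * I) = if m = 0 then 2 * Real.pi else 0 := by
  split_ifs with h
  · simp [h]; ring
  · have hm : (m : ℂ) * I ≠ 0 := mul_ne_zero (by exact_mod_cast h) I_ne_zero
    have e : ∀ t : ℝ, Complex.exp (m * t * I) = Complex.exp (m * I * t) := fun t => by
      congr 1; ring
    simp_rw [e]
    rw [integral_exp_mul_complex hm]
    have h2 : Complex.exp (m * I * (Real.pi : ℝ)) = Complex.exp (m * I * ((-Real.pi : ℝ) : ℂ)) := by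
      rw [Complex.exp_eq_exp_iff_exists_int]
      exact ⟨m, by push_cast; ring⟩
    rw [h2, sub_self, zero_div, Complex.ofReal_zero]

/-- The coefficients `c_j = sin ((j+1) π / (n+2))`, the first eigenvector of the path on
`{0, …, n}`; they maximize the first moment of the kernel `|∑ c_j e^{ijt}|²`. -/
def fejerCoef (n j : ℕ) : ℝ := Real.sin ((j + 1 : ℕ) * (Real.pi / (n + 2)))

/-- The normalizing constant `∑ c_j²`. -/
def fejerMass (n : ℕ) : ℝ := ∑ j ∈ Finset.range (n + 1), fejerCoef n j ^ 2

lemma fejerMass_pos (n : ℕ) : 0 < fejerMass n := by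
  unfold fejerMass
  refine Finset.sum_pos' (fun j _ => sq_nonneg _) ⟨0, by simp, ?_⟩
  refine pow_pos ?_ 2
  unfold fejerCoef
  refine Real.sin_pos_of_pos_of_lt_pi (by positivity) ?_
  have : Real.pi / (n + 2) < Real.pi := by
    refine div_lt_self Real.pi_pos ?_
    have : (0 : ℝ) ≤ n := Nat.cast_nonneg n
    linarith
  simpa using this

/-- Summing the eigenvector equation `c_{j-1} + c_{j+1} = 2 cos θ · c_j` against `c_j`. -/
lemma sum_fejerCoef_mul (n : ℕ) :
    ∑ j ∈ Finset.range n, fejerCoef n j * fejerCoef n (j + 1)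
      = Real.cos (Real.pi / (n + 2)) * fejerMass n := by
  set θ := Real.pi / (n + 2) with hθ
  set s : ℕ → ℝ := fun j => Real.sin (j * θ) with hs
  have hc : ∀ j, fejerCoef n j = s (j + 1) := fun j => rfl
  have hs0 : s 0 = 0 := by simp [hs]
  have hs1 : s (n + 2) = 0 := by
    have : ((n + 2 : ℕ) : ℝ) * θ = Real.pi := by rw [hθ]; push_cast; field_simp
    simp only [hs, this, Real.sin_pi]
  have h1 : ∀ j, s j + s (j + 2) = 2 * Real.cos θ * s (j + 1) := by
    intro j
    have a : ((j : ℕ) : ℝ) * θ = ((j + 1 : ℕ) : ℝ) * θ - θ := by push_cast; ring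
    have b : ((j + 2 : ℕ) : ℝ) * θ = ((j + 1 : ℕ) : ℝ) * θ + θ := by push_cast; ring
    simp only [hs]
    rw [a, b, Real.sin_sub, Real.sin_add]
    ring
  have h2 : ∑ j ∈ Finset.range (n + 1), s j * s (j + 1)
      = ∑ j ∈ Finset.range n, fejerCoef n j * fejerCoef n (j + 1) := by
    rw [Finset.sum_range_succ']
    simp [hs0, hc]
  have h3 : ∑ j ∈ Finset.range (n + 1), s (j + 1) * s (j + 2)
      = ∑ j ∈ Finset.range n, fejerCoef n j * fejerCoef n (j + 1) := by
    rw [Finset.sum_range_succ]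
    simp [hs1, hc]
  have h4 : 2 * (Real.cos θ * fejerMass n) =
      ∑ j ∈ Finset.range (n + 1), (s j * s (j + 1) + s (j + 1) * s (j + 2)) := by
    unfold fejerMass
    rw [Finset.mul_sum, Finset.mul_sum]
    refine Finset.sum_congr rfl fun j _ => ?_
    rw [hc]
    linear_combination (-s (j + 1)) * h1 j
  rw [Finset.sum_add_distrib, h2, h3] at h4
  linarith

/-- The positive kernel `K(t) = |∑_{j ≤ n} c_j e^{ijt}|² / (2π ∑ c_j²)`. -/
def fejerKer (n : ℕ) (t : ℝ) : ℝ :=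
  ‖∑ j ∈ Finset.range (n + 1), (fejerCoef n j : ℂ) * Complex.exp (j * t * I)‖ ^ 2
    / (2 * Real.pi * fejerMass n)

lemma fejerKer_nonneg (n : ℕ) (t : ℝ) : 0 ≤ fejerKer n t := by
  have := fejerMass_pos n
  unfold fejerKer
  positivity

lemma continuous_fejerKer (n : ℕ) : Continuous (fejerKer n) := by
  unfold fejerKer
  fun_prop

lemma ofReal_fejerKer (n : ℕ) (t : ℝ) :
    (fejerKer n t : ℂ) = (∑ j ∈ Finset.range (n + 1), ∑ l ∈ Finset.range (n + 1),
      (fejerCoef n j * fejerCoef n l : ℂ) * Complex.exp (((j : ℤ) - (l : ℤ) : ℤ) * t * I))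
        / (2 * Real.pi * fejerMass n) := by
  unfold fejerKer
  push_cast
  rw [← Complex.mul_conj', map_sum, Finset.sum_mul_sum]
  congr 1
  refine Finset.sum_congr rfl fun j _ => Finset.sum_congr rfl fun l _ => ?_
  rw [map_mul, ← Complex.exp_conj, Complex.conj_ofReal, mul_mul_mul_comm, ← Complex.exp_add]
  congr 2
  simp
  ring

lemma fejerKer_neg (n : ℕ) (t : ℝ) : fejerKer n (-t) = fejerKer n t := by
  unfold fejerKer
  congr 2
  rw [← Complex.norm_conj, map_sum]
  congr 1
  refine Finset.sum_congr rfl fun j _ => ?_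
  rw [map_mul, ← Complex.exp_conj, Complex.conj_ofReal]
  simp

lemma integral_fejerKer_mul (n : ℕ) (m : ℤ) :
    ∫ t in (-Real.pi)..Real.pi, (fejerKer n t : ℂ) * Complex.exp (m * t * I)
      = (∑ j ∈ Finset.range (n + 1), ∑ l ∈ Finset.range (n + 1),
          if (j : ℤ) - l + m = 0 then (fejerCoef n j * fejerCoef n l : ℂ) else 0)
        / fejerMass n := by
  have hD : (fejerMass n : ℂ) ≠ 0 := by exact_mod_cast (fejerMass_pos n).ne'
  have hpi : (Real.pi : ℂ) ≠ 0 := by exact_mod_cast Real.pi_ne_zero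
  have e : ∀ t : ℝ, (fejerKer n t : ℂ) * Complex.exp (m * t * I) =
      ∑ j ∈ Finset.range (n + 1), ∑ l ∈ Finset.range (n + 1),
        (fejerCoef n j * fejerCoef n l : ℂ) / (2 * Real.pi * fejerMass n) *
          Complex.exp (((j : ℤ) - (l : ℤ) + m : ℤ) * t * I) := by
    intro t
    rw [ofReal_fejerKer, Finset.sum_div, Finset.sum_mul]
    refine Finset.sum_congr rfl fun j _ => ?_
    rw [Finset.sum_div, Finset.sum_mul]
    refine Finset.sum_congr rfl fun l _ => ?_
    rw [Int.cast_add, add_mul, add_mul, Complex.exp_add]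
    ring
  simp_rw [e]
  rw [intervalIntegral.integral_finsetSum
    fun j _ => Continuous.intervalIntegrable (by fun_prop) _ _, Finset.sum_div]
  refine Finset.sum_congr rfl fun j _ => ?_
  rw [intervalIntegral.integral_finsetSum
    fun j _ => Continuous.intervalIntegrable (by fun_prop) _ _, Finset.sum_div]
  refine Finset.sum_congr rfl fun l _ => ?_
  rw [intervalIntegral.integral_const_mul, integral_exp_int]
  split_ifs
  · push_cast
    field_simp
  · simp

/-- The probability measure with density `fejerKer n` on `(-π, π]`. -/
def fejerMeas (n : ℕ) : Measure ℝ :=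
  (volume.restrict (Ioc (-Real.pi) Real.pi)).withDensity fun t => ENNReal.ofReal (fejerKer n t)

lemma integral_fejerMeas {E : Type*} [NormedAddCommGroup E] [NormedSpace ℝ E] (n : ℕ) (g : ℝ → E) :
    ∫ t, g t ∂fejerMeas n = ∫ t in (-Real.pi)..Real.pi, fejerKer n t • g t := by
  unfold fejerMeas
  rw [integral_withDensity_eq_integral_toReal_smul
    (continuous_fejerKer n).measurable.ennreal_ofReal (by simp),
    intervalIntegral.integral_of_le (by linarith [Real.pi_pos])]
  refine integral_congr_ae (ae_of_all _ fun t => ?_)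
  simp only [ENNReal.toReal_ofReal (fejerKer_nonneg n t)]

lemma moment_fejerMeas (n : ℕ) (m : ℤ) :
    ∫ t, Complex.exp (m * t * I) ∂fejerMeas n
      = (∑ j ∈ Finset.range (n + 1), ∑ l ∈ Finset.range (n + 1),
          if (j : ℤ) - l + m = 0 then (fejerCoef n j * fejerCoef n l : ℂ) else 0)
        / fejerMass n := by
  rw [← integral_fejerKer_mul, integral_fejerMeas]
  simp_rw [Complex.real_smul]

/-- Moments above the degree vanish. -/
lemma moment_fejerMeas_of_lt {n m : ℕ} (h : n < m) :
    ∫ t, Complex.exp (m * t * I) ∂fejerMeas n = 0 := by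
  have := moment_fejerMeas n m
  push_cast at this
  rw [this, Finset.sum_eq_zero, zero_div]
  intro j _
  refine Finset.sum_eq_zero fun l hl => ?_
  rw [if_neg]
  have := Finset.mem_range.1 hl
  omega

instance isFiniteMeasure_fejerMeas (n : ℕ) : IsFiniteMeasure (fejerMeas n) := by
  unfold fejerMeas
  refine isFiniteMeasure_withDensity_ofReal ?_
  have : IntegrableOn (fejerKer n) (Ioc (-Real.pi) Real.pi) :=
    ((continuous_fejerKer n).integrableOn_Icc).mono_set Ioc_subset_Icc_self
  exact this.2

instance isProbabilityMeasure_fejerMeas (n : ℕ) : IsProbabilityMeasure (fejerMeas n) := by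
  have h := moment_fejerMeas n 0
  have e : ∀ j ∈ Finset.range (n + 1), (∑ l ∈ Finset.range (n + 1),
      if (j : ℤ) - l + 0 = 0 then (fejerCoef n j * fejerCoef n l : ℂ) else 0)
        = (fejerCoef n j : ℂ) ^ 2 := by
    intro j hj
    rw [Finset.sum_eq_single_of_mem j hj]
    · simp [sq]
    · intro l _ hl
      rw [if_neg]
      omega
  rw [Finset.sum_congr rfl e] at h
  have hD : (∑ j ∈ Finset.range (n + 1), (fejerCoef n j : ℂ) ^ 2) = fejerMass n := by
    unfold fejerMass
    push_cast
    rfl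
  rw [hD, div_self (by exact_mod_cast (fejerMass_pos n).ne')] at h
  simp only [Int.cast_zero, zero_mul, Complex.exp_zero, integral_const, Complex.real_smul,
    mul_one] at h
  have h' : (fejerMeas n).real univ = 1 := by exact_mod_cast h
  refine ⟨?_⟩
  rwa [measureReal_def, ENNReal.toReal_eq_one_iff] at h'

lemma integral_cos_fejerMeas (n : ℕ) :
    ∫ t, Real.cos t ∂fejerMeas n = Real.cos (Real.pi / (n + 2)) := by
  have h := moment_fejerMeas n 1
  have e : (∑ j ∈ Finset.range (n + 1), ∑ l ∈ Finset.range (n + 1),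
      if (j : ℤ) - l + 1 = 0 then (fejerCoef n j * fejerCoef n l : ℂ) else 0)
        = (Real.cos (Real.pi / (n + 2)) * fejerMass n : ℝ) := by
    rw [← sum_fejerCoef_mul, Finset.sum_range_succ, Finset.sum_eq_zero (s := Finset.range (n + 1)),
      add_zero]
    · push_cast
      refine Finset.sum_congr rfl fun j hj => ?_
      have hj := Finset.mem_range.1 hj
      rw [Finset.sum_eq_single_of_mem (j + 1) (by simp; omega)]
      · rw [if_pos (by push_cast; ring)]
      · intro l _ hl
        rw [if_neg]
        omega
    · intro l hl
      have := Finset.mem_range.1 hl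
      rw [if_neg]
      omega
  rw [e, Complex.ofReal_mul, mul_div_cancel_right₀ _ (by exact_mod_cast (fejerMass_pos n).ne')] at h
  have hi : Integrable (fun t : ℝ => Complex.exp ((1 : ℤ) * t * I)) (fejerMeas n) := by
    refine Integrable.of_bound (C := 1) (Continuous.aestronglyMeasurable (by fun_prop)) ?_
    refine ae_of_all _ fun t => ?_
    simp [Complex.norm_exp_ofReal_mul_I]
  have h2 := congrArg Complex.re h
  rw [Complex.ofReal_re, ← RCLike.re_eq_complex_re, ← integral_re hi] at h2
  rw [← h2]
  refine integral_congr_ae (ae_of_all _ fun t => ?_)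
  simp [Complex.exp_ofReal_mul_I_re]

lemma measurePreserving_neg_fejerMeas (n : ℕ) :
    MeasurePreserving (fun t : ℝ => -t) (fejerMeas n) (fejerMeas n) := by
  refine ⟨measurable_neg, ?_⟩
  have h0 : (volume.restrict (Ioc (-Real.pi) Real.pi)) =
      volume.restrict (Ioo (-Real.pi) Real.pi) := Measure.restrict_congr_set Ioo_ae_eq_Ioc.symm
  have h1 : MeasurePreserving (fun t : ℝ => -t) (volume.restrict (Ioo (-Real.pi) Real.pi))
      (volume.restrict (Ioo (-Real.pi) Real.pi)) := by
    have := (Measure.measurePreserving_neg (volume : Measure ℝ)).restrict_preimage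
      (measurableSet_Ioo (a := -Real.pi) (b := Real.pi))
    have e : (Neg.neg : ℝ → ℝ) ⁻¹' Ioo (-Real.pi) Real.pi = Ioo (-Real.pi) Real.pi := by
      ext t
      simp only [mem_preimage, mem_Ioo]
      constructor <;> rintro ⟨a, b⟩ <;> constructor <;> linarith
    rwa [e] at this
  ext s hs
  rw [Measure.map_apply measurable_neg hs]
  unfold fejerMeas
  rw [h0, withDensity_apply _ hs, withDensity_apply _ (measurable_neg hs),
    ← h1.setLIntegral_comp_preimage hs (continuous_fejerKer n).measurable.ennreal_ofReal]
  simp_rw [fejerKer_neg]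

lemma ae_abs_le_fejerMeas (n : ℕ) : ∀ᵐ t ∂fejerMeas n, |t| ≤ Real.pi := by
  refine (withDensity_absolutelyContinuous _ _).ae_le ?_
  filter_upwards [ae_restrict_mem measurableSet_Ioc] with t ht
  exact abs_le.2 ⟨ht.1.le, ht.2⟩

lemma integrable_abs_rpow_fejerMeas (n : ℕ) {β : ℝ} (hβ : 0 < β) :
    Integrable (fun t : ℝ => |t| ^ β) (fejerMeas n) := by
  refine Integrable.of_bound (C := Real.pi ^ β)
    (Measurable.aestronglyMeasurable (by fun_prop)) ?_
  filter_upwards [ae_abs_le_fejerMeas n] with t ht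
  rw [Real.norm_of_nonneg (by positivity)]
  gcongr

lemma integral_sq_fejerMeas_le {n : ℕ} (hn : 1 ≤ n) :
    ∫ t, |t| ^ (2 : ℝ) ∂fejerMeas n ≤ (Real.pi ^ 2 / 2 / n) ^ 2 := by
  have hn' : (0 : ℝ) < n := by exact_mod_cast hn
  have hc : Integrable (fun t : ℝ => Real.cos t) (fejerMeas n) := by
    refine Integrable.of_bound (C := 1) (by fun_prop) (ae_of_all _ fun t => ?_)
    simpa using Real.abs_cos_le_one t
  have h1 : ∫ t, |t| ^ (2 : ℝ) ∂fejerMeas n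
      ≤ ∫ t, Real.pi ^ 2 / 2 * (1 - Real.cos t) ∂fejerMeas n := by
    refine integral_mono_ae (integrable_abs_rpow_fejerMeas n two_pos)
      (((integrable_const 1).sub hc).const_mul _) ?_
    filter_upwards [ae_abs_le_fejerMeas n] with t ht
    have := Real.cos_le_one_sub_mul_cos_sq ht
    have h2 : t ^ 2 = Real.pi ^ 2 / 2 * (2 / Real.pi ^ 2 * t ^ 2) := by field_simp
    rw [Real.rpow_two, sq_abs, h2]
    gcongr
    linarith
  refine h1.trans ?_
  rw [integral_const_mul, integral_sub (integrable_const 1) hc, integral_cos_fejerMeas]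
  simp only [integral_const, probReal_univ, smul_eq_mul, mul_one]
  have h3 := Real.one_sub_sq_div_two_le_cos (x := Real.pi / (n + 2))
  have h4 : (Real.pi / (n + 2)) ^ 2 ≤ (Real.pi / n) ^ 2 := by
    gcongr
    linarith
  calc Real.pi ^ 2 / 2 * (1 - Real.cos (Real.pi / (n + 2)))
      ≤ Real.pi ^ 2 / 2 * ((Real.pi / n) ^ 2 / 2) := by gcongr; linarith
    _ = _ := by ring

/-- Jensen's inequality turns the second moment into a bound for the moments of order `β ≤ 2`. -/
lemma integral_abs_rpow_fejerMeas_le {n : ℕ} (hn : 1 ≤ n) {β : ℝ} (h0 : 0 < β) (h2 : β ≤ 2) :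
    ∫ t, |t| ^ β ∂fejerMeas n ≤ (Real.pi ^ 2 / 2 / n) ^ β := by
  have hn' : (0 : ℝ) < n := by exact_mod_cast hn
  have hq : 1 ≤ 2 / β := by rw [le_div_iff₀ h0]; linarith
  have e : ∀ t : ℝ, (|t| ^ β) ^ (2 / β) = |t| ^ (2 : ℝ) := fun t => by
    rw [← Real.rpow_mul (abs_nonneg t)]; congr 1; field_simp
  have hj : (∫ t, |t| ^ β ∂fejerMeas n) ^ (2 / β) ≤ ∫ t, (|t| ^ β) ^ (2 / β) ∂fejerMeas n := by
    refine (convexOn_rpow hq).map_integral_le ?_ isClosed_Ici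
      (ae_of_all _ fun t => Real.rpow_nonneg (abs_nonneg t) _)
      (integrable_abs_rpow_fejerMeas n h0) ?_
    · exact continuousOn_id.rpow_const fun x _ => Or.inr (by positivity)
    · simp only [Function.comp_def, e]
      exact integrable_abs_rpow_fejerMeas n two_pos
  simp_rw [e] at hj
  have h3 := hj.trans (integral_sq_fejerMeas_le hn)
  have hnn : 0 ≤ ∫ t, |t| ^ β ∂fejerMeas n :=
    integral_nonneg fun t => Real.rpow_nonneg (abs_nonneg t) _
  have h4 := Real.rpow_le_rpow (by positivity) h3 (by positivity : 0 ≤ β / 2)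
  rw [← Real.rpow_mul hnn, ← Real.rpow_two, ← Real.rpow_mul (by positivity)] at h4
  have h5 : 2 / β * (β / 2) = 1 := by field_simp
  have h6 : 2 * (β / 2) = β := by ring
  rwa [h5, h6, Real.rpow_one] at h4

/-! ### Averages of rotations -/

/-- Averaging the rotations of an analytic function against a probability measure whose moments
above `n` vanish gives a polynomial of degree at most `n`. -/
lemma exists_poly_average {ν : Measure ℝ} [IsProbabilityMeasure ν] {n : ℕ}
    (hν : ∀ m : ℕ, n < m → ∫ t, Complex.exp (m * t * I) ∂ν = 0) {F : ℂ → ℂ}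
    (hF : DifferentiableOn ℂ F unitDisc) :
    ∃ P : Polynomial ℂ, P.natDegree ≤ n ∧ ∀ z ∈ unitDisc, P.eval z = ∫ t, F (rot t z) ∂ν := by
  set a : ℕ → ℂ := fun m => (m.factorial : ℂ)⁻¹ * iteratedDeriv m F 0 with ha
  have hsum : ∀ z ∈ unitDisc, HasSum (fun m => a m * z ^ m) (F z) := by
    intro z hz
    have h := Complex.hasSum_taylorSeries_on_ball hF hz
    refine h.congr_fun ?_
    intro m
    simp only [sub_zero, smul_eq_mul, ha]
    ring
  set b : ℕ → ℂ := fun m => a m * ∫ t, Complex.exp (m * t * I) ∂ν with hb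
  refine ⟨∑ m ∈ Finset.range (n + 1), Polynomial.monomial m (b m), ?_, ?_⟩
  · refine Polynomial.natDegree_sum_le_of_forall_le _ _ fun m hm => ?_
    exact (Polynomial.natDegree_monomial_le _).trans (by simpa [Nat.lt_succ_iff] using hm)
  · intro z hz
    have hterm : ∀ (m : ℕ) (t : ℝ),
        a m * rot t z ^ m = (a m * z ^ m) * Complex.exp (m * t * I) := by
      intro m t
      rw [rot, mul_pow, ← Complex.exp_nat_mul]
      ring_nf
    have hexp : ∀ (m : ℕ) (t : ℝ), ‖Complex.exp (m * t * I)‖ = 1 := by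
      intro m t
      have := Complex.norm_exp_ofReal_mul_I (m * t)
      push_cast at this
      exact this
    have h := hasSum_integral_of_summable_integral_norm (μ := ν)
      (F := fun (m : ℕ) (t : ℝ) => a m * rot t z ^ m) ?_ ?_
    · have e1 : ∫ t, ∑' m, a m * rot t z ^ m ∂ν = ∫ t, F (rot t z) ∂ν :=
        integral_congr_ae (ae_of_all _ fun t => (hsum _ (rot_mem_unitDisc.2 hz)).tsum_eq)
      rw [e1] at h
      have e2 : ∀ m, ∫ t, a m * rot t z ^ m ∂ν = b m * z ^ m := by
        intro m
        simp_rw [hterm]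
        rw [integral_const_mul, hb]
        ring
      simp_rw [e2] at h
      rw [← h.tsum_eq, tsum_eq_sum (s := Finset.range (n + 1)), Polynomial.eval_finsetSum]
      · simp
      · intro m hm
        have hm' : n < m := by simpa [Nat.lt_succ_iff] using hm
        simp [hb, hν m hm']
    · intro m
      refine Integrable.of_bound (C := ‖a m * z ^ m‖)
        (Continuous.aestronglyMeasurable (by unfold rot; fun_prop)) (ae_of_all _ fun t => ?_)
      rw [hterm, norm_mul, hexp, mul_one]
    · have e3 : ∀ m, ∫ t, ‖a m * rot t z ^ m‖ ∂ν = ‖a m * z ^ m‖ := by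
        intro m
        simp_rw [hterm, norm_mul _ (Complex.exp _), hexp]
        simp
      simp_rw [e3]
      exact (hsum z hz).summable.norm

/-- Averaging rotations does not increase the norm (Jensen, Fubini, rotation invariance). -/
lemma integral_norm_average_le {ν : Measure ℝ} [IsProbabilityMeasure ν] {p α : ℝ} (hp : 1 < p)
    {f : ℂ → ℂ} (hf : MemLp f (ENNReal.ofReal p) (bMeas α)) :
    ∫ z, ‖∫ t, f (rot t z) ∂ν‖ ^ p ∂bMeas α ≤ ∫ z, ‖f z‖ ^ p ∂bMeas α := by
  have hp0 : 0 < p := one_pos.trans hp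
  have hprod : MemLp (fun x : ℝ × ℂ => f (rot x.1 x.2)) (ENNReal.ofReal p) (ν.prod (bMeas α)) :=
    hf.comp_measurePreserving (measurePreserving_rot_prod α ν)
  have hint := integrable_of_memLp hp0 hprod
  have hae : ∀ᵐ z ∂bMeas α, AEStronglyMeasurable (fun t => f (rot t z)) ν :=
    hprod.1.prod_swap.prodMk_left
  have hfp : AEStronglyMeasurable (fun z => ‖f z‖ ^ p) (bMeas α) := (integrable_of_memLp hp0 hf).1
  calc ∫ z, ‖∫ t, f (rot t z) ∂ν‖ ^ p ∂bMeas α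
      ≤ ∫ z, ∫ t, ‖f (rot t z)‖ ^ p ∂ν ∂bMeas α := by
        refine integral_mono_of_nonneg (ae_of_all _ fun z => by positivity)
          hint.integral_prod_right ?_
        filter_upwards [hae, hint.prod_left_ae] with z hz hz'
        have hL := memLp_of_integrable hp0 hz hz'
        have hi : Integrable (fun t => f (rot t z)) ν :=
          hL.integrable (by simpa using hp.le)
        calc ‖∫ t, f (rot t z) ∂ν‖ ^ p ≤ (∫ t, ‖f (rot t z)‖ ∂ν) ^ p := by
              gcongr
              exact norm_integral_le_integral_norm _
          _ ≤ ∫ t, ‖f (rot t z)‖ ^ p ∂ν :=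
              (convexOn_rpow hp.le).map_integral_le
                (continuousOn_id.rpow_const fun x _ => Or.inr hp0.le) isClosed_Ici
                (ae_of_all _ fun t => norm_nonneg _) hi.norm hz'
    _ = ∫ t, ∫ z, ‖f (rot t z)‖ ^ p ∂bMeas α ∂ν :=
        (integral_integral_swap (f := fun t z => ‖f (rot t z)‖ ^ p) hint).symm
    _ = ∫ z, ‖f z‖ ^ p ∂bMeas α := by
        have : ∀ t, ∫ z, ‖f (rot t z)‖ ^ p ∂bMeas α = ∫ z, ‖f z‖ ^ p ∂bMeas α :=
          fun t => integral_rot α t hfp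
        simp_rw [this]
        simp

/-- The rotations are moved from `f` to `g`, and the symmetry of `ν` produces the second
difference of `g`. -/
lemma re_integral_average_ge {ν : Measure ℝ} [IsProbabilityMeasure ν]
    (hsymm : MeasurePreserving (fun t : ℝ => -t) ν ν) {p q α β M : ℝ}
    (hpq : p.HolderConjugate q) (hβ : Integrable (fun t : ℝ => |t| ^ β) ν)
    {f g : ℂ → ℂ} (hf : MemLp f (ENNReal.ofReal p) (bMeas α))
    (hg : MemLp g (ENNReal.ofReal q) (bMeas α)) (hf1 : ∫ z, ‖f z‖ ^ p ∂bMeas α = 1)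
    (hM : ∀ t : ℝ, (∫ z, ‖g (rot t z) + g (rot (-t) z) - 2 * g z‖ ^ q ∂bMeas α) ^ (1 / q)
      ≤ M * |t| ^ β) :
    (∫ z, f z * (starRingEnd ℂ) (g z) ∂bMeas α).re - M / 2 * ∫ t, |t| ^ β ∂ν
      ≤ (∫ z, (∫ t, f (rot t z) ∂ν) * (starRingEnd ℂ) (g z) ∂bMeas α).re := by
  have hprod : MemLp (fun x : ℝ × ℂ => f (rot x.1 x.2)) (ENNReal.ofReal p) (ν.prod (bMeas α)) :=
    hf.comp_measurePreserving (measurePreserving_rot_prod α ν)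
  have hgs : MemLp (fun x : ℝ × ℂ => g x.2) (ENNReal.ofReal q) (ν.prod (bMeas α)) :=
    hg.comp_snd ν
  have hint := integrable_mul_conj hpq hprod hgs
  set c : ℝ → ℂ := fun t => ∫ z, f z * (starRingEnd ℂ) (g (rot t z)) ∂bMeas α with hc
  have hgr : ∀ t, MemLp (fun z => g (rot t z)) (ENNReal.ofReal q) (bMeas α) := fun t =>
    hg.comp_measurePreserving (measurePreserving_rot α t)
  have hcneg : ∀ t, ∫ z, f (rot t z) * (starRingEnd ℂ) (g z) ∂bMeas α = c (-t) := by
    intro t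
    rw [hc]
    simp only
    rw [← integral_rot α t (integrable_mul_conj hpq hf (hgr (-t))).1]
    simp only [rot_neg_rot]
  have hP : ∫ z, (∫ t, f (rot t z) ∂ν) * (starRingEnd ℂ) (g z) ∂bMeas α = ∫ t, c (-t) ∂ν := by
    simp_rw [← hcneg, ← integral_mul_const]
    exact (integral_integral_swap (f := fun t z => f (rot t z) * (starRingEnd ℂ) (g z)) hint).symm
  have hci : Integrable (fun t => c (-t)) ν := by
    have := hint.integral_prod_left
    simpa only [hcneg] using this
  have hci' : Integrable c ν := by
    have := hsymm.integrable_comp_of_integrable hci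
    simpa [Function.comp_def] using this
  have hsw : ∫ t, c (-t) ∂ν = ∫ t, c t ∂ν :=
    hsymm.integral_comp (Homeomorph.neg ℝ).measurableEmbedding c
  have hlow : ∀ t, 2 * (c 0).re - M * |t| ^ β ≤ (c t).re + (c (-t)).re := by
    intro t
    have h0 : rot 0 = id := by
      ext1 z
      simp [rot]
    have e : c t + c (-t) - 2 * c 0 = ∫ z, f z *
        (starRingEnd ℂ) (g (rot t z) + g (rot (-t) z) - 2 * g z) ∂bMeas α := by
      simp only [hc, h0, id]
      have hadd : Integrable (fun z => f z * (starRingEnd ℂ) (g (rot t z))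
          + f z * (starRingEnd ℂ) (g (rot (-t) z))) (bMeas α) :=
        (integrable_mul_conj hpq hf (hgr t)).add (integrable_mul_conj hpq hf (hgr (-t)))
      rw [← integral_const_mul, ← integral_add (integrable_mul_conj hpq hf (hgr t))
        (integrable_mul_conj hpq hf (hgr (-t))),
        ← integral_sub hadd ((integrable_mul_conj hpq hf hg).const_mul 2)]
      refine integral_congr_ae (ae_of_all _ fun z => ?_)
      simp only [map_sub, map_add, map_mul, map_ofNat]
      ring
    have h1 := norm_integral_mul_conj_le hpq hf
      (((hgr t).add (hgr (-t))).sub (hg.const_mul 2))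
    simp only [Pi.sub_apply, Pi.add_apply] at h1
    rw [← e, hf1, Real.one_rpow, one_mul] at h1
    have h2 := (abs_le.1 ((Complex.abs_re_le_norm _).trans (h1.trans (hM t)))).1
    simp at h2
    linarith
  have hc0 : c 0 = ∫ z, f z * (starRingEnd ℂ) (g z) ∂bMeas α := by
    simp [hc, rot]
  have hre : Integrable (fun t => (c t).re) ν := hci'.re
  have hre' : Integrable (fun t => (c (-t)).re) ν := hci.re
  have hmono : ∫ t, (2 * (c 0).re - M * |t| ^ β) ∂ν ≤ ∫ t, ((c t).re + (c (-t)).re) ∂ν :=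
    integral_mono ((integrable_const _).sub (hβ.const_mul M)) (hre.add hre') hlow
  rw [integral_add hre hre', integral_sub (integrable_const _) (hβ.const_mul M),
    integral_const_mul M] at hmono
  have e1 : ∫ t, (c t).re ∂ν = (∫ t, c t ∂ν).re := integral_re hci'
  have e2 : ∫ t, (c (-t)).re ∂ν = (∫ t, c (-t) ∂ν).re := integral_re hci
  rw [e1, e2, hsw] at hmono
  simp only [integral_const, probReal_univ, one_smul] at hmono
  rw [hP, hsw, ← hc0]
  linarith

/-! ### From near-maximality to the rate of convergence -/

/-- The extremal property says that the functional has norm at most `1`. -/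
lemma re_pairing_le {p q α : ℝ} (hα : -1 < α) (hpq : p.HolderConjugate q) {k F : ℂ → ℂ}
    (hF : IsExtremalFor p α k F) (hnorm : pairing α F k = 1) {g : ℂ → ℂ} (hg : MemAp p α g)
    {c : ℝ} (hc : 0 < c) (hgc : ∫ z, ‖g z‖ ^ p ∂bMeas α ≤ c ^ p) :
    (pairing α g k).re ≤ c := by
  have e : ∀ z, ‖g z / c‖ ^ p = ‖g z‖ ^ p / c ^ p := fun z => by
    rw [norm_div, Complex.norm_real, Real.norm_of_nonneg hc.le,
      Real.div_rpow (norm_nonneg _) hc.le]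
  have hmem : MemAp p α (fun z => g z / c) := by
    refine memAp_of_integrable hα (hg.1.div_const _) ?_
    simp_rw [e]
    exact (integrable_of_memAp hα hg).div_const _
  have hle : bNorm p α (fun z => g z / c) ≤ 1 := by
    rw [bNorm_eq hα]
    refine Real.rpow_le_one (integral_nonneg fun z => by positivity) ?_
      (by have := hpq.pos; positivity)
    simp_rw [e]
    rw [integral_div]
    exact div_le_one_of_le₀ hgc (by positivity)
  have h := hF.2.2 _ hmem hle
  have e2 : pairing α (fun z => g z / c) k = pairing α g k / c := by
    rw [pairing_eq hα, pairing_eq hα, ← integral_div]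
    refine integral_congr_ae (ae_of_all _ fun z => ?_)
    simp only
    ring
  rw [e2, hnorm, Complex.div_ofReal_re, Complex.one_re, div_le_one hc] at h
  exact h

lemma integral_eq_one_of_bNorm {p α : ℝ} (hα : -1 < α) (hp : 0 < p) {f : ℂ → ℂ}
    (hf : bNorm p α f = 1) : ∫ z, ‖f z‖ ^ p ∂bMeas α = 1 := by
  rw [bNorm_eq hα] at hf
  have h0 : 0 ≤ ∫ z, ‖f z‖ ^ p ∂bMeas α := integral_nonneg fun z => by positivity
  have := congrArg (· ^ p) hf
  simpa [← Real.rpow_mul h0, hp.ne'] using this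

/-- The polynomial `∫ F(e^{it} ·) dν(t)` shows that the value of the functional at `F_n` is close
to its maximum. -/
lemma re_pairing_extremalPoly_ge {p q α β M : ℝ} (hp1 : 1 < p) (hpq : p.HolderConjugate q)
    (hα : -1 < α) (hβ0 : 0 < β) (hβ2 : β ≤ 2) (hM0 : 0 ≤ M)
    {k : ℂ → ℂ} (hk : MemAp q α k)
    (hM : ∀ t : ℝ, bNorm q α (fun z =>
        k (Complex.exp (t * Complex.I) * z)
          + k (Complex.exp (-t * Complex.I) * z) - 2 * k z) ≤ M * |t| ^ β)
    {F : ℂ → ℂ} (hF : IsExtremalFor p α k F) (hnorm : pairing α F k = 1)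
    {n : ℕ} (hn : 1 ≤ n) {Fn : Polynomial ℂ} (hFn : IsExtremalPolyFor p α k n Fn) :
    1 - M / 2 * (Real.pi ^ 2 / 2 / n) ^ β ≤ (pairing α (fun z => Fn.eval z) k).re := by
  have hFL : MemLp F (ENNReal.ofReal p) (bMeas α) := memLp_of_integrable hpq.pos
    (aestronglyMeasurable_bMeas hF.1.1.continuousOn) (integrable_of_memAp hα hF.1)
  have hkL : MemLp k (ENNReal.ofReal q) (bMeas α) := memLp_of_integrable hpq.symm.pos
    (aestronglyMeasurable_bMeas hk.1.continuousOn) (integrable_of_memAp hα hk)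
  have hF1 := integral_eq_one_of_bNorm hα hpq.pos hF.2.1
  obtain ⟨P, hPdeg, hP⟩ := exists_poly_average (ν := fejerMeas n)
    (fun m hm => moment_fejerMeas_of_lt hm) hF.1.1
  have hP1 : bNorm p α (fun z => P.eval z) ≤ 1 := by
    rw [bNorm_eq hα]
    refine Real.rpow_le_one (integral_nonneg fun z => by positivity) ?_
      (by have := hpq.pos; positivity)
    refine le_of_eq_of_le (integral_congr_ae ?_)
      ((integral_norm_average_le (ν := fejerMeas n) hp1 hFL).trans hF1.le)
    filter_upwards [ae_mem_unitDisc α] with z hz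
    rw [hP z hz]
  refine le_trans ?_ (hFn.2.2 P hPdeg hP1)
  have hPk : pairing α (fun z => P.eval z) k
      = ∫ z, (∫ t, F (rot t z) ∂fejerMeas n) * (starRingEnd ℂ) (k z) ∂bMeas α := by
    rw [pairing_eq hα]
    refine integral_congr_ae ?_
    filter_upwards [ae_mem_unitDisc α] with z hz
    rw [hP z hz]
  have h := re_integral_average_ge (measurePreserving_neg_fejerMeas n) hpq
    (integrable_abs_rpow_fejerMeas n hβ0) hFL hkL hF1 (M := M) (fun t => by
      have := hM t
      rw [bNorm_eq hα] at this
      simpa [rot] using this)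
  rw [← hPk, ← pairing_eq hα, hnorm, Complex.one_re] at h
  refine le_trans ?_ h
  have := integral_abs_rpow_fejerMeas_le hn hβ0 hβ2
  gcongr

/-- The midpoint `(F + F_n)/2` has norm almost `1`, since the functional is almost `1` there;
uniform convexity then forces `F_n` to be close to `F`. -/
lemma bNorm_sub_pow_four_le {p q α β M : ℝ} (hp1 : 1 < p) (hp2 : p < 2)
    (hpq : p.HolderConjugate q) (hα : -1 < α) (hβ0 : 0 < β) (hβ2 : β ≤ 2) (hM0 : 0 ≤ M)
    {k : ℂ → ℂ} (hk : MemAp q α k)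
    (hM : ∀ t : ℝ, bNorm q α (fun z =>
        k (Complex.exp (t * Complex.I) * z)
          + k (Complex.exp (-t * Complex.I) * z) - 2 * k z) ≤ M * |t| ^ β)
    {F : ℂ → ℂ} (hF : IsExtremalFor p α k F) (hnorm : pairing α F k = 1)
    {n : ℕ} (hn : 1 ≤ n) {Fn : Polynomial ℂ} (hFn : IsExtremalPolyFor p α k n Fn) :
    bNorm p α (fun z => F z - Fn.eval z) ^ 4
      ≤ 8 * M * (Real.pi ^ 2 / 2 / n) ^ β / (p - 1) ^ 2 := by
  classical
  have hp0 : 0 < p := hpq.pos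
  have hge := re_pairing_extremalPoly_ge hp1 hpq hα hβ0 hβ2 hM0 hk hM hF hnorm hn hFn
  set B := (Real.pi ^ 2 / 2 / n) ^ β with hB
  have hB0 : 0 ≤ B := by positivity
  set δ := M * B / 4 with hδ
  have hδ0 : 0 ≤ δ := by positivity
  have hFint := integrable_of_memAp hα hF.1
  have hF1 := integral_eq_one_of_bNorm hα hp0 hF.2.1
  have hFn1 := integral_eq_one_of_bNorm hα hp0 hFn.2.1
  have hFnint : Integrable (fun z => ‖Fn.eval z‖ ^ p) (bMeas α) := by
    by_contra h
    rw [integral_undef h] at hFn1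
    exact zero_ne_one hFn1
  have hFL : MemLp F (ENNReal.ofReal p) (bMeas α) := memLp_of_integrable hp0
    (aestronglyMeasurable_bMeas hF.1.1.continuousOn) hFint
  have hFnL : MemLp (fun z => Fn.eval z) (ENNReal.ofReal p) (bMeas α) := memLp_of_integrable hp0
    Fn.continuous.aestronglyMeasurable hFnint
  have hkL : MemLp k (ENNReal.ofReal q) (bMeas α) := memLp_of_integrable hpq.symm.pos
    (aestronglyMeasurable_bMeas hk.1.continuousOn) (integrable_of_memAp hα hk)
  have hGL : MemLp (fun z => (F z + Fn.eval z) / 2) (ENNReal.ofReal p) (bMeas α) := by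
    simpa [div_eq_inv_mul] using (hFL.add hFnL).const_mul ((2 : ℂ)⁻¹)
  have hGmem : MemAp p α (fun z => (F z + Fn.eval z) / 2) := by
    refine memAp_of_integrable hα ?_ (integrable_of_memLp hp0 hGL)
    exact (hF.1.1.add Fn.differentiable.differentiableOn).div_const _
  have hGpair : 1 - δ ≤ (pairing α (fun z => (F z + Fn.eval z) / 2) k).re := by
    have e : pairing α (fun z => (F z + Fn.eval z) / 2) k
        = (pairing α F k + pairing α (fun z => Fn.eval z) k) / 2 := by
      rw [pairing_eq hα, pairing_eq hα, pairing_eq hα,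
        ← integral_add (integrable_mul_conj hpq hFL hkL) (integrable_mul_conj hpq hFnL hkL),
        ← integral_div]
      refine integral_congr_ae (ae_of_all _ fun z => ?_)
      simp only
      ring
    rw [e, hnorm]
    simp only [Complex.div_ofNat_re, Complex.add_re, Complex.one_re]
    linarith
  have hmid : 1 - p * δ ≤ ∫ z, ‖(F z + Fn.eval z) / 2‖ ^ p ∂bMeas α := by
    by_contra! hlt
    set J := ∫ z, ‖(F z + Fn.eval z) / 2‖ ^ p ∂bMeas α with hJ
    have hJ0 : 0 ≤ J := integral_nonneg fun z => by positivity
    have hδ1 : δ < 1 := by nlinarith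
    have h1 := one_add_mul_self_le_rpow_one_add (s := -δ) (by linarith) hp1.le
    have h2 : J ^ (1 / p) < 1 - δ := by
      rw [one_div, Real.rpow_inv_lt_iff_of_pos hJ0 (by linarith) hp0]
      rw [← sub_eq_add_neg] at h1
      linarith
    have h3 : 0 ≤ J ^ (1 / p) := by positivity
    have h4 : J ≤ ((J ^ (1 / p) + (1 - δ)) / 2) ^ p := by
      rw [← Real.rpow_inv_le_iff_of_pos hJ0 (by linarith) hp0, ← one_div]
      linarith
    have h5 := re_pairing_le hα hpq hF hnorm hGmem (by linarith) h4
    linarith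
  -- `uniform_convexity` asks for globally measurable functions, so `F` is cut off to the disc.
  have hcut : ∀ᵐ z ∂bMeas α, unitDisc.piecewise F 0 z = F z := by
    filter_upwards [ae_mem_unitDisc α] with z hz
    exact Set.piecewise_eq_of_mem _ _ _ hz
  have hcm : Measurable (unitDisc.piecewise F 0) :=
    hF.1.1.continuousOn.measurable_piecewise continuousOn_const measurableSet_unitDisc
  have i1 : ∫ z, ‖unitDisc.piecewise F 0 z‖ ^ p ∂bMeas α = ∫ z, ‖F z‖ ^ p ∂bMeas α :=
    integral_congr_ae (hcut.mono fun z hz => by simp only [hz])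
  have i2 : ∫ z, ‖(unitDisc.piecewise F 0 z + Fn.eval z) / 2‖ ^ p ∂bMeas α
      = ∫ z, ‖(F z + Fn.eval z) / 2‖ ^ p ∂bMeas α :=
    integral_congr_ae (hcut.mono fun z hz => by simp only [hz])
  have i3 : ∫ z, ‖(unitDisc.piecewise F 0 z - Fn.eval z) / 2‖ ^ p ∂bMeas α
      = ∫ z, ‖(F z - Fn.eval z) / 2‖ ^ p ∂bMeas α :=
    integral_congr_ae (hcut.mono fun z hz => by simp only [hz])
  have huc := uniform_convexity hp1 hp2 hδ0 hcm Fn.continuous.measurable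
    (hFint.congr (hcut.mono fun z hz => by simp only [hz])) hFnint
    (i1.trans hF1).le hFn1.le (hmid.trans i2.ge)
  rw [i3] at huc
  have hhalf : (∫ z, ‖(F z - Fn.eval z) / 2‖ ^ p ∂bMeas α) ^ (1 / p)
      = bNorm p α (fun z => F z - Fn.eval z) / 2 := by
    rw [bNorm_eq hα]
    have e : ∀ z, ‖(F z - Fn.eval z) / 2‖ ^ p = ‖F z - Fn.eval z‖ ^ p / 2 ^ p := fun z => by
      rw [norm_div, Real.div_rpow (norm_nonneg _) (norm_nonneg _)]
      simp
    simp_rw [e]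
    rw [integral_div, Real.div_rpow (integral_nonneg fun z => by positivity) (by positivity),
      ← Real.rpow_mul (by norm_num : (0 : ℝ) ≤ 2)]
    congr 1
    rw [mul_one_div_cancel hp0.ne', Real.rpow_one]
  rw [hhalf, div_pow] at huc
  have : 8 * M * B / (p - 1) ^ 2 = 2 ^ 4 * (2 * δ / (p - 1) ^ 2) := by
    rw [hδ]; ring
  rw [this]
  linarith

/-- Taking fourth roots; one factor `(p-1)⁻¹ ≥ 1` is given away. -/
lemma le_of_pow_four_le {X A M p β : ℝ} {n : ℕ} (hp1 : 1 < p) (hp2 : p < 2) (hA : 0 ≤ A)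
    (hM : 0 ≤ M) (hn : 1 ≤ n) (hAβ : (Real.pi ^ 2 / 2) ^ β ≤ 32 * A ^ 2)
    (hX : X ^ 4 ≤ 8 * M * (Real.pi ^ 2 / 2 / n) ^ β / (p - 1) ^ 2) :
    X ≤ 4 * (p - 1) ^ (-(3 : ℝ) / 4) * A ^ ((1 : ℝ) / 2) * M ^ ((1 : ℝ) / 4)
      * (n : ℝ) ^ (-β / 4) := by
  have hn' : (0 : ℝ) < n := by exact_mod_cast hn
  have hp : 0 < p - 1 := by linarith
  have pw : ∀ {x : ℝ} (_ : 0 ≤ x) (s : ℝ), (x ^ s) ^ 4 = x ^ (s * 4) := fun hx s => by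
    rw [← Real.rpow_natCast, ← Real.rpow_mul hx]; norm_num
  refine le_of_pow_le_pow_left₀ four_ne_zero (by positivity) (hX.trans ?_)
  rw [mul_pow, mul_pow, mul_pow, mul_pow, pw hp.le, pw hA, pw hM, pw hn'.le,
    show -(3 : ℝ) / 4 * 4 = -(3 : ℕ) by norm_num, show (1 : ℝ) / 2 * 4 = (2 : ℕ) by norm_num,
    show (1 : ℝ) / 4 * 4 = 1 by norm_num, show -β / 4 * 4 = -β by ring, Real.rpow_one,
    Real.rpow_neg hp.le, Real.rpow_natCast, Real.rpow_natCast, Real.rpow_neg hn'.le,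
    Real.div_rpow (by positivity) hn'.le]
  have h1 : (p - 1) ^ 3 ≤ (p - 1) ^ 2 := pow_le_pow_of_le_one hp.le (by linarith) (by norm_num)
  have hnβ : 0 < (n : ℝ) ^ β := by positivity
  calc 8 * M * ((Real.pi ^ 2 / 2) ^ β / (n : ℝ) ^ β) / (p - 1) ^ 2
      ≤ 8 * M * (32 * A ^ 2 / (n : ℝ) ^ β) / (p - 1) ^ 3 := by gcongr
    _ = _ := by
      field_simp
      ring

/-- Rate of convergence of the degree-`n` extremal polynomials to the extremal
function in `A^p_α`, for `1 < p < 2` and a kernel `k ∈ Λ*_{β,A^q_α}`. -/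
theorem extremal_poly_rate_p_lt_two
    (p q α β : ℝ) (hp1 : 1 < p) (hp2 : p < 2) (hq : 1/p + 1/q = 1) (hα : -1 < α)
    (hβ0 : 0 < β) (hβ2 : β ≤ 2)
    (k : ℂ → ℂ) (hk : MemAp q α k) (hkne : ∃ z ∈ unitDisc, k z ≠ 0)
    (M : ℝ)
    (hM : ∀ t : ℝ, bNorm q α (fun z =>
        k (Complex.exp (t * Complex.I) * z)
          + k (Complex.exp (-t * Complex.I) * z) - 2 * k z) ≤ M * |t| ^ β)
    (F : ℂ → ℂ) (hF : IsExtremalFor p α k F) (hnorm : pairing α F k = 1)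
    (n : ℕ) (hn : 1 ≤ n) (Fn : Polynomial ℂ) (hFn : IsExtremalPolyFor p α k n Fn) :
    (β < 2 → bNorm p α (fun z => F z - Fn.eval z)
        ≤ 4 * (p - 1) ^ (-(3:ℝ)/4) * Acoef (β/2) ^ ((1:ℝ)/2)
            * M ^ ((1:ℝ)/4) * (n : ℝ) ^ (-β/4)) ∧
    (β = 2 → bNorm p α (fun z => F z - Fn.eval z)
        ≤ 4 * (p - 1) ^ (-(3:ℝ)/4) * Btil0 ^ ((1:ℝ)/2)
            * M ^ ((1:ℝ)/4) * (n : ℝ) ^ (-β/4)) := by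
  have hpq : p.HolderConjugate q :=
    Real.holderConjugate_iff.2 ⟨hp1, by simpa [one_div] using hq⟩
  have hM0 : 0 ≤ M := by
    have h := hM 1
    rw [bNorm_eq hα, abs_one, Real.one_rpow, mul_one] at h
    exact (Real.rpow_nonneg (integral_nonneg fun z => by positivity) _).trans h
  have hX := bNorm_sub_pow_four_le hp1 hp2 hpq hα hβ0 hβ2 hM0 hk hM hF hnorm hn hFn
  refine ⟨fun hβ => ?_, fun hβ => ?_⟩
  · exact le_of_pow_four_le hp1 hp2 (Acoef_nonneg (by linarith) (by linarith)) hM0 hn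
      (rpow_le_Acoef_sq hβ0 hβ) hX
  · refine le_of_pow_four_le hp1 hp2 (le_trans (by norm_num) le_Btil0) hM0 hn ?_ hX
    rw [hβ]
    exact rpow_le_Btil0_sq
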